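/- Let Σ_A(ℕ) be a topologically mixing, finitely primitive (BIP) countable Markov shift, f : Σ_A(ℕ) → ℝ satisfying the Walters condition with Var_1 f < ∞ and P(f) < ∞, and for β > 1 let μ_β be the Gibbs measure of βf. Then the family (μ_β)_{β>1} has a weak* accumulation point as β → ∞; moreover, every weak* limit μ_∞ of a sequence μ_{β_j} with β_j → ∞ is a maximizing measure for f, i.e. ∫ f dμ_∞ = m(f). -/

import Mathlib

open Filter Topology MeasureTheory
open scoped ENNReal

/-- The countable Markov shift over alphabet ℕ determined by the 0-1 matrix `A`. -/
def MarkovShift (A : ℕ → ℕ → Bool) : Type :=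
  {x : ℕ → ℕ // ∀ i, A (x i) (x (i + 1)) = true}

namespace MarkovShift

variable {A : ℕ → ℕ → Bool}

instance : TopologicalSpace (MarkovShift A) :=
  instTopologicalSpaceSubtype

instance : MeasurableSpace (MarkovShift A) := borel _

instance : BorelSpace (MarkovShift A) := ⟨rfl⟩

/-- The shift map. -/
def shift (x : MarkovShift A) : MarkovShift A :=
  ⟨fun n => x.1 (n + 1), fun i => x.2 (i + 1)⟩

/-- The cylinder set determined by a finite word. -/
def cylinder (w : List ℕ) : Set (MarkovShift A) :=
  {x | ∀ i : Fin w.length, x.1 i = w.get i}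

/-- The cylinder set determined by the first `m` coordinates of `x`. -/
def cylOf (x : MarkovShift A) (m : ℕ) : Set (MarkovShift A) :=
  {y | ∀ i < m, y.1 i = x.1 i}

/-- A symbol is admissible when its cylinder is nonempty. -/
def Admissible (A : ℕ → ℕ → Bool) (a : ℕ) : Prop :=
  ∃ x : MarkovShift A, x.1 0 = a

/-- Topologically mixing. -/
def TopologicallyMixing (A : ℕ → ℕ → Bool) : Prop :=
  ∀ a b : ℕ, Admissible A a → Admissible A b →
    ∃ N : ℕ, ∀ n ≥ N, ∃ x : MarkovShift A, x.1 0 = a ∧ (shift^[n] x).1 0 = b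

/-- Finitely primitive (BIP). -/
def FinitelyPrimitive (A : ℕ → ℕ → Bool) : Prop :=
  ∃ (K₀ : ℕ) (F : Finset ℕ), ∀ a b : ℕ, Admissible A a → Admissible A b →
    ∃ w : List ℕ, w.length = K₀ ∧ (∀ c ∈ w, c ∈ F) ∧
      List.Chain' (fun u v => A u v = true) (a :: (w ++ [b]))

/-- First coordinate where two distinct points disagree. -/
noncomputable def firstDiff (x y : MarkovShift A) (h : x ≠ y) : ℕ :=
  Nat.find (Function.ne_iff.mp (fun hxy : x.1 = y.1 => h (Subtype.ext hxy)))

open Classical in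
/-- The metric `d(x,y) = r^{t(x,y)}`. -/
noncomputable def dist' (r : ℝ) (x y : MarkovShift A) : ℝ :=
  if h : x = y then 0 else r ^ firstDiff x y h

/-- Birkhoff sum `S_n f`. -/
def birkhoff (f : MarkovShift A → ℝ) (n : ℕ) (x : MarkovShift A) : ℝ :=
  ∑ j ∈ Finset.range n, f (shift^[j] x)

/-- The set of values `|S_n f x - S_n f y|` over pairs agreeing on the first `m` coordinates. -/
def varSet (f : MarkovShift A → ℝ) (n m : ℕ) : Set ℝ :=
  {c | ∃ x y : MarkovShift A, (∀ i < m, x.1 i = y.1 i) ∧ c = |birkhoff f n x - birkhoff f n y|}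

/-- `Var_m (S_n f)`. -/
noncomputable def varBirk (f : MarkovShift A → ℝ) (n m : ℕ) : ℝ := sSup (varSet f n m)

/-- `Var_1 f < ∞`. -/
def Var1Finite (f : MarkovShift A → ℝ) : Prop := BddAbove (varSet f 1 1)

/-- The set whose supremum is `sup_{n ≥ 1} Var_{n+k}(S_n f)`. -/
def waltersSet (f : MarkovShift A → ℝ) (k : ℕ) : Set ℝ :=
  {c | ∃ n, 1 ≤ n ∧ c ∈ varSet f n (n + k)}

/-- `M_k = sup_{n ≥ 1} Var_{n+k}(S_n f)`. -/
noncomputable def waltersSup (f : MarkovShift A → ℝ) (k : ℕ) : ℝ := sSup (waltersSet f k)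

/-- The Walters condition. -/
def SatisfiesWalters (f : MarkovShift A → ℝ) : Prop :=
  (∀ k, 1 ≤ k → BddAbove (waltersSet f k)) ∧
    Tendsto (fun k => waltersSup f k) atTop (𝓝 0)

/-- The partition function `Z_n(f,a) = Σ_{σ^n x = x, x₀ = a} e^{S_n f (x)}`. -/
noncomputable def partitionSum (f : MarkovShift A → ℝ) (n : ℕ) (a : ℕ) : ℝ :=
  ∑' x : {x : MarkovShift A // shift^[n] x = x ∧ x.1 0 = a}, Real.exp (birkhoff f n x.1)

/-- `f` has (finite) Gurevich pressure `p`. -/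
def HasGurevichPressure (f : MarkovShift A → ℝ) (p : ℝ) : Prop :=
  ∀ a : ℕ, Admissible A a →
    (∀ n, 1 ≤ n → Summable fun x : {x : MarkovShift A // shift^[n] x = x ∧ x.1 0 = a} =>
        Real.exp (birkhoff f n x.1)) ∧
    Tendsto (fun n : ℕ => (1 / (n : ℝ)) * Real.log (partitionSum f n a)) atTop (𝓝 p)

/-- σ-invariant Borel probability measure. -/
def IsInvariantProb (μ : Measure (MarkovShift A)) : Prop :=
  IsProbabilityMeasure μ ∧ μ.map shift = μ

/-- `m(f)`, the maximal ergodic average. -/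
noncomputable def mf (f : MarkovShift A → ℝ) : ℝ :=
  sSup {c | ∃ μ : Measure (MarkovShift A),
    IsInvariantProb μ ∧ Integrable f μ ∧ ∫ x, f x ∂μ = c}

/-- A maximizing measure for `f`. -/
def IsMaximizing (f : MarkovShift A → ℝ) (μ : Measure (MarkovShift A)) : Prop :=
  IsInvariantProb μ ∧ Integrable f μ ∧ ∫ x, f x ∂μ = mf f

/-- Bounded real valued function. -/
def BoundedFun (g : MarkovShift A → ℝ) : Prop := ∃ C, ∀ x, |g x| ≤ C

/-- A bounded calibrated sub-action for `f`. -/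
def IsCalibratedSubaction (f V : MarkovShift A → ℝ) : Prop :=
  Continuous V ∧ BoundedFun V ∧
    (∀ x, f x + V x - V (shift x) - mf f ≤ 0) ∧
    (∀ y, ∃ x, shift x = y ∧ f x + V x - V (shift x) - mf f = 0)

/-- The Ruelle transfer operator `(L_g u)(x) = Σ_{σ y = x} e^{g(y)} u(y)`. -/
noncomputable def ruelle (g u : MarkovShift A → ℝ) (x : MarkovShift A) : ℝ :=
  ∑' y : {y : MarkovShift A // shift y = x}, Real.exp (g y.1) * u y.1

/-- Ruelle-Perron-Frobenius data for the potential `f` with pressure `p`: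
eigenfunction `h`, eigenmeasure `ν`. -/
def IsRPF (f : MarkovShift A → ℝ) (p : ℝ) (h : MarkovShift A → ℝ)
    (ν : Measure (MarkovShift A)) : Prop :=
  Continuous h ∧ (∀ x, 0 < h x) ∧
    (∀ x, ruelle f h x = Real.exp p * h x) ∧
    IsProbabilityMeasure ν ∧
    (∀ g : MarkovShift A → ℝ, Continuous g → BoundedFun g →
      ∫ x, ruelle f g x ∂ν = Real.exp p * ∫ x, g x ∂ν) ∧
    ∫ x, h x ∂ν = 1

/-- The Gibbs measure `dμ = h dν`. -/
noncomputable def gibbs (h : MarkovShift A → ℝ) (ν : Measure (MarkovShift A)) :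
    Measure (MarkovShift A) :=
  ν.withDensity fun x => ENNReal.ofReal (h x)

/-- The Mañé potential `S_f(x,y)` (with respect to the metric of parameter `r`). -/
noncomputable def manePot (r : ℝ) (f : MarkovShift A → ℝ) (x y : MarkovShift A) : EReal :=
  ⨅ ε : {ε : ℝ // 0 < ε}, ⨆ n : {n : ℕ // 1 ≤ n},
    ⨆ _z : {z : MarkovShift A // dist' r x z < ε.1 ∧ shift^[n.1] z = y},
      ((birkhoff (fun w => f w - mf f) n.1 _z.1 : ℝ) : EReal)

/-- The (topological) support of a measure. -/
def msupport (μ : Measure (MarkovShift A)) : Set (MarkovShift A) :=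
  {x | ∀ U : Set (MarkovShift A), IsOpen U → x ∈ U → 0 < μ U}

end MarkovShift

/-!
Normalising `β f` by the logarithm of its eigenfunction gives a cohomologous potential `ψ_β ≤ 0`
whose transfer operator fixes `1` and whose dual fixes `μ_β`. Since `∫ ψ_β dm = β ∫ f dm - P(β f)`
for every invariant `m`, the measure `μ_β` is within `β⁻¹ ∫ (-ψ_β) dμ_β` of maximizing `∫ f`.

The BIP property and bounded distortion give a Harnack inequality for the eigenfunction whose
constant is the exponential of a quantity linear in `β`. Comparing with one fixed `β₁`, the function
`e^{ψ_β / 2}` is dominated, uniformly in large `β`, by a summable function of the first symbol. As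
`t e^{-t} ≤ 2 e^{-t / 2}`, this bounds `∫ (-ψ_β) dμ_β` and the measures of all symbols at once. The
latter makes the family tight, and the former makes weak limits maximizing, because `μ ↦ ∫ f dμ` is
upper semicontinuous for `f` bounded above.
-/

/-- The exponential `ℝ → [0, ∞]`; the weights of transfer operators take values in `[0, ∞]` so that
their sums always make sense. -/
noncomputable def ennexp (t : ℝ) : ℝ≥0∞ := EReal.exp t

lemma ennexp_eq_ofReal (t : ℝ) : ennexp t = ENNReal.ofReal (Real.exp t) := EReal.exp_coe t

@[simp] lemma ennexp_zero : ennexp 0 = 1 := by simp [ennexp]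

lemma ennexp_add (s t : ℝ) : ennexp (s + t) = ennexp s * ennexp t := by
  rw [ennexp, EReal.coe_add, EReal.exp_add, ennexp, ennexp]

@[simp] lemma ennexp_ne_zero (t : ℝ) : ennexp t ≠ 0 := by simp [ennexp_eq_ofReal, Real.exp_pos]

@[simp] lemma ennexp_ne_top (t : ℝ) : ennexp t ≠ ∞ := by simp [ennexp_eq_ofReal]

@[simp] lemma toReal_ennexp (t : ℝ) : (ennexp t).toReal = Real.exp t := by
  simp [ennexp_eq_ofReal, Real.exp_nonneg]

@[simp] lemma ennexp_le_ennexp {s t : ℝ} : ennexp s ≤ ennexp t ↔ s ≤ t :=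
  EReal.exp_le_exp_iff.trans EReal.coe_le_coe_iff

lemma exists_le_ennexp {t : ℝ≥0∞} (ht : t ≠ ∞) : ∃ b, t ≤ ennexp b :=
  ⟨t.toReal, by
    rw [← ENNReal.toReal_le_toReal ht (ennexp_ne_top _), toReal_ennexp]
    linarith [Real.add_one_le_exp t.toReal]⟩

lemma ennexp_mul_ofReal_neg_le (t : ℝ) :
    ennexp t * ENNReal.ofReal (-t) ≤ 2 * ennexp (t / 2) := by
  have ht : -t ≤ 2 * Real.exp (-(t / 2)) := by linarith [Real.add_one_le_exp (-(t / 2))]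
  have hle : Real.exp t * -t ≤ 2 * Real.exp (t / 2) :=
    calc Real.exp t * -t ≤ Real.exp t * (2 * Real.exp (-(t / 2))) := by gcongr
      _ = 2 * Real.exp (t / 2) := by
        rw [mul_left_comm, ← Real.exp_add]
        ring_nf
  rw [ennexp_eq_ofReal, ennexp_eq_ofReal, ← ENNReal.ofReal_mul (Real.exp_nonneg _),
    ← ENNReal.ofReal_ofNat 2, ← ENNReal.ofReal_mul zero_le_two]
  exact ENNReal.ofReal_le_ofReal hle

lemma ennexp_log {t : ℝ} (ht : 0 < t) : ennexp (Real.log t) = ENNReal.ofReal t := by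
  rw [ennexp_eq_ofReal, Real.exp_log ht]

@[fun_prop] lemma continuous_ennexp : Continuous ennexp :=
  ENNReal.continuous_exp.comp continuous_coe_real_ereal

section FiberSum

variable {X Y Z : Type*}

/-- The sum of a weight `w` over the fibres of a map `T`. Transfer operators are fibre sums. -/
noncomputable def fiberSum (T : X → Y) (w : X → ℝ≥0∞) (y : Y) : ℝ≥0∞ :=
  ∑' x : T ⁻¹' {y}, w x

lemma fiberSum_id (w : X → ℝ≥0∞) : fiberSum id w = w := by
  ext y
  exact (tsum_subtype {y} w).trans <|
    (tsum_eq_single y fun x hx => Set.indicator_of_notMem (by simpa using hx) w).trans (by simp)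

lemma fiberSum_mono (T : X → Y) {v w : X → ℝ≥0∞} (hvw : v ≤ w) : fiberSum T v ≤ fiberSum T w :=
  fun _ => ENNReal.tsum_le_tsum fun x => hvw x

lemma fiberSum_comp_mul (T : X → Y) (v : Y → ℝ≥0∞) (w : X → ℝ≥0∞) :
    fiberSum T (fun x => v (T x) * w x) = fun y => v y * fiberSum T w y := by
  ext y
  rw [fiberSum, fiberSum, ← ENNReal.tsum_mul_left]
  refine tsum_congr fun x => ?_
  rw [show T x = y from x.2]

lemma fiberSum_comp (S : Y → Z) (T : X → Y) (w : X → ℝ≥0∞) :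
    fiberSum (S ∘ T) w = fiberSum S (fiberSum T w) := by
  ext z
  let e : (Σ y : S ⁻¹' {z}, T ⁻¹' {y.1}) ≃ (S ∘ T) ⁻¹' {z} :=
    { toFun := fun p => ⟨p.2.1, by
        rw [Set.mem_preimage, Function.comp_apply, show T p.2.1 = p.1.1 from p.2.2]; exact p.1.2⟩
      invFun := fun x => ⟨⟨T x.1, x.2⟩, ⟨x.1, rfl⟩⟩
      left_inv := by rintro ⟨⟨y, hy⟩, ⟨x, hx⟩⟩; obtain rfl : T x = y := hx; rfl
      right_inv := fun _ => rfl }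
  rw [fiberSum, ← e.tsum_eq, ENNReal.tsum_sigma']
  rfl

end FiberSum

section WeakConvergence

variable {X : Type*} [TopologicalSpace X] [MeasurableSpace X]

lemma integrable_and_le_integral_of_tendsto [OpensMeasurableSpace X]
    [HasOuterApproxClosed X] {f : X → ℝ} (hf : Continuous f) {B : ℝ} (hB : ∀ x, f x ≤ B)
    {μs : ℕ → ProbabilityMeasure X} {μ : ProbabilityMeasure X} (hμ : Tendsto μs atTop (𝓝 μ))
    {a : ℕ → ℝ} {c : ℝ} (ha : Tendsto a atTop (𝓝 c))
    (hint : ∀ᶠ j in atTop, Integrable f (μs j : Measure X) ∧ a j ≤ ∫ x, f x ∂(μs j : Measure X)) :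
    Integrable f (μ : Measure X) ∧ c ≤ ∫ x, f x ∂(μ : Measure X) := by
  have hdef (x : X) : 0 ≤ B - f x := sub_nonneg.2 (hB x)
  have hcont : Continuous fun x => B - f x := continuous_const.sub hf
  have hfatou : ∫⁻ x, ENNReal.ofReal (B - f x) ∂(μ : Measure X) ≤
      atTop.liminf fun j => ∫⁻ x, ENNReal.ofReal (B - f x) ∂(μs j : Measure X) :=
    lintegral_le_liminf_lintegral_of_forall_isOpen_measure_le_liminf_measure
      hcont hdef
      fun G hG => ProbabilityMeasure.le_liminf_measure_open_of_tendsto hμ hG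
  have hle : ∫⁻ x, ENNReal.ofReal (B - f x) ∂(μ : Measure X) ≤ ENNReal.ofReal (B - c) := by
    refine hfatou.trans ?_
    rw [← ((ENNReal.continuous_ofReal.tendsto (B - c)).comp (ha.const_sub B)).liminf_eq]
    refine liminf_le_liminf (hint.mono fun j ⟨hfj, haj⟩ => ?_)
    rw [← ofReal_integral_eq_lintegral_ofReal (by fun_prop) (ae_of_all _ hdef),
      integral_sub (integrable_const B) hfj]
    simpa using ENNReal.ofReal_le_ofReal (sub_le_sub_left haj B)
  have hdefint : Integrable (fun x => B - f x) (μ : Measure X) :=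
    ⟨hcont.aestronglyMeasurable, (hasFiniteIntegral_iff_ofReal (ae_of_all _ hdef)).2
      (hle.trans_lt ENNReal.ofReal_lt_top)⟩
  have hfint : Integrable f (μ : Measure X) := by
    simpa [Pi.sub_def] using (integrable_const B).sub hdefint
  have hcB : c ≤ B := le_of_tendsto ha (hint.mono fun j ⟨hfj, haj⟩ => haj.trans <| by
    simpa using integral_mono hfj (integrable_const B) hB)
  rw [← ofReal_integral_eq_lintegral_ofReal hdefint (ae_of_all _ hdef),
    ENNReal.ofReal_le_ofReal_iff (sub_nonneg.2 hcB), integral_sub (integrable_const B) hfint] at hle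
  simp only [integral_const, probReal_univ, smul_eq_mul, one_mul] at hle
  exact ⟨hfint, by linarith⟩

end WeakConvergence

namespace MarkovShift

variable {A : ℕ → ℕ → Bool}

section Topology

lemma isClosedEmbedding_val : IsClosedEmbedding (Subtype.val : MarkovShift A → ℕ → ℕ) := by
  have hclosed : IsClosed {x : ℕ → ℕ | ∀ i, A (x i) (x (i + 1)) = true} := by
    rw [Set.ofPred_forall]
    have hA : Continuous fun q : ℕ × ℕ => A q.1 q.2 := continuous_of_discreteTopology
    refine isClosed_iInter fun i => ?_
    have hi : Continuous fun x : ℕ → ℕ => (x i, x (i + 1)) := by fun_prop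
    exact isClosed_eq (hA.comp hi) continuous_const
  exact hclosed.isClosedEmbedding_subtypeVal

instance : SecondCountableTopology (MarkovShift A) :=
  isClosedEmbedding_val.isEmbedding.secondCountableTopology

instance : TopologicalSpace.MetrizableSpace (MarkovShift A) :=
  isClosedEmbedding_val.isEmbedding.metrizableSpace

lemma continuous_coord (i : ℕ) : Continuous fun x : MarkovShift A => x.1 i :=
  (continuous_apply i).comp continuous_subtype_val

lemma continuous_iff_forall_apply {Y : Type*} [TopologicalSpace Y] {φ : Y → MarkovShift A} :
    Continuous φ ↔ ∀ i, Continuous fun y => (φ y).1 i :=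
  continuous_induced_rng.trans continuous_pi_iff

lemma self_mem_cylOf (x : MarkovShift A) (n : ℕ) : x ∈ cylOf x n := fun _ _ => rfl

lemma isClopen_cylinder (w : List ℕ) : IsClopen (cylinder w : Set (MarkovShift A)) := by
  rw [cylinder, Set.ofPred_forall]
  exact isClopen_iInter_of_finite fun i =>
    (isClopen_discrete {w.get i}).preimage (continuous_coord i)

lemma cylOf_eq_cylinder (x : MarkovShift A) (n : ℕ) :
    cylOf x n = cylinder (List.ofFn fun i : Fin n => x.1 i) := by
  ext y
  simp [cylOf, cylinder, Fin.forall_iff]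

lemma isClopen_cylOf (x : MarkovShift A) (n : ℕ) : IsClopen (cylOf x n) :=
  cylOf_eq_cylinder x n ▸ isClopen_cylinder _

lemma nhds_hasBasis_cylOf (x : MarkovShift A) : (𝓝 x).HasBasis (fun _ => True) (cylOf x) := by
  refine hasBasis_iff.2 fun U => ⟨fun hU => ?_, fun ⟨n, _, hn⟩ =>
    mem_of_superset ((isClopen_cylOf x n).isOpen.mem_nhds (self_mem_cylOf x n)) hn⟩
  obtain ⟨V, hV, hVU⟩ := (mem_nhds_induced _ _ _).1 hU
  obtain ⟨_, ⟨z, n, rfl⟩, hxz, hzV⟩ :=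
    (PiNat.isTopologicalBasis_cylinders fun _ : ℕ => ℕ).mem_nhds_iff.1 hV
  exact ⟨n, trivial, fun y hy => hVU (hzV fun i hi => (hy i hi).trans (hxz i hi))⟩

lemma isLocallyConstant_of_cylOf {Y : Type*} {φ : MarkovShift A → Y} (n : ℕ)
    (hφ : ∀ x, ∀ y ∈ cylOf x n, φ y = φ x) : IsLocallyConstant φ :=
  (IsLocallyConstant.iff_eventually_eq φ).2 fun x =>
    mem_of_superset ((nhds_hasBasis_cylOf x).mem_of_mem trivial) (hφ x)

lemma isPiSystem_cylOf :
    IsPiSystem {s : Set (MarkovShift A) | ∃ x n, s = cylOf x n} := by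
  rintro _ ⟨x, m, rfl⟩ _ ⟨y, n, rfl⟩ ⟨z, hzx, hzy⟩
  refine ⟨z, max m n, Set.ext fun u => ?_⟩
  simp only [cylOf, Set.mem_inter_iff, Set.mem_ofPred_eq, lt_max_iff] at *
  grind

/-- Clopen sets in a single symbol class are the test sets on which measures are compared: a
transfer operator may be infinite on a larger set. -/
lemma isTopologicalBasis_isClopen_subset_symbol :
    TopologicalSpace.IsTopologicalBasis
      {s : Set (MarkovShift A) | IsClopen s ∧ ∃ a, ∀ x ∈ s, x.1 0 = a} := by
  refine TopologicalSpace.isTopologicalBasis_of_isOpen_of_nhds (fun s hs => hs.1.isOpen) ?_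
  intro x U hx hU
  obtain ⟨n, -, hn⟩ := (nhds_hasBasis_cylOf x).mem_iff.1 (hU.mem_nhds hx)
  exact ⟨cylOf x (n + 1), ⟨isClopen_cylOf x _, x.1 0, fun y hy => hy 0 n.succ_pos⟩,
    self_mem_cylOf x _, fun y hy => hn fun i hi => hy i (hi.trans n.lt_succ_self)⟩

lemma continuous_shift : Continuous (shift : MarkovShift A → MarkovShift A) :=
  continuous_iff_forall_apply.2 fun i => continuous_coord (i + 1)

lemma shift_apply (x : MarkovShift A) (i : ℕ) : (shift x).1 i = x.1 (i + 1) := rfl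

lemma shift_iterate_apply (n i : ℕ) (x : MarkovShift A) : (shift^[n] x).1 i = x.1 (i + n) := by
  induction n generalizing x with
  | zero => rfl
  | succ n ih => rw [Function.iterate_succ_apply, ih, shift_apply, add_assoc]

end Topology

section InverseBranches

/-- The inverse branch `x ↦ a x` of the shift; where `A a (x 0)` fails it is the identity. -/
def branch (a : ℕ) (x : MarkovShift A) : MarkovShift A :=
  if h : A a (x.1 0) = true then ⟨fun n => n.casesOn a x.1, fun i => i.casesOn h x.2⟩ else x

lemma branch_of_not {a : ℕ} {x : MarkovShift A} (h : ¬A a (x.1 0) = true) : branch a x = x :=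
  dif_neg h

lemma branch_apply_zero {a : ℕ} {x : MarkovShift A} (h : A a (x.1 0) = true) :
    (branch a x).1 0 = a := by
  simp [branch, h]

lemma branch_apply_succ {a : ℕ} {x : MarkovShift A} (h : A a (x.1 0) = true) (i : ℕ) :
    (branch a x).1 (i + 1) = x.1 i := by
  simp [branch, h]

lemma shift_branch {a : ℕ} {x : MarkovShift A} (h : A a (x.1 0) = true) :
    shift (branch a x) = x :=
  Subtype.ext (funext (branch_apply_succ h))

lemma branch_shift (x : MarkovShift A) : branch (x.1 0) (shift x) = x :=
  Subtype.ext <| funext fun i => i.casesOn (branch_apply_zero (x.2 0)) (branch_apply_succ (x.2 0))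

lemma branch_mem_cylOf {a n : ℕ} {x y : MarkovShift A} (hn : 0 < n) (hy : y ∈ cylOf x n) :
    branch a y ∈ cylOf (branch a x) n := by
  intro i hi
  have h0 : y.1 0 = x.1 0 := hy 0 hn
  by_cases h : A a (x.1 0) = true
  · cases i with
    | zero => rw [branch_apply_zero h, branch_apply_zero (h0 ▸ h)]
    | succ i => rw [branch_apply_succ h, branch_apply_succ (h0 ▸ h), hy i (by omega)]
  · rw [branch_of_not h, branch_of_not (h0 ▸ h), hy i hi]

lemma continuous_branch (a : ℕ) : Continuous (branch a : MarkovShift A → MarkovShift A) :=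
  continuous_iff_forall_apply.2 fun i => (isLocallyConstant_of_cylOf (i + 1) fun _ _ hy =>
    branch_mem_cylOf i.succ_pos hy i i.lt_succ_self).continuous

/-- The points that have a preimage starting with the symbol `a`. -/
def followers (A : ℕ → ℕ → Bool) (a : ℕ) : Set (MarkovShift A) := {x | A a (x.1 0) = true}

lemma measurableSet_followers (a : ℕ) : MeasurableSet (followers A a) :=
  ((isClopen_discrete {b | A a b = true}).preimage (continuous_coord 0)).isOpen.measurableSet

lemma fiberSum_shift (w : MarkovShift A → ℝ≥0∞) (x : MarkovShift A) :
    fiberSum shift w x = ∑' a, (followers A a).indicator (w ∘ branch a) x := by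
  let e : {a | A a (x.1 0) = true} ≃ (shift : MarkovShift A → MarkovShift A) ⁻¹' {x} :=
    { toFun := fun a => ⟨branch a x, shift_branch a.2⟩
      invFun := fun y => ⟨y.1.1 0, by obtain ⟨y, rfl⟩ := y; exact y.2 0⟩
      left_inv := fun a => Subtype.ext (branch_apply_zero a.2)
      right_inv := by rintro ⟨y, rfl⟩; exact Subtype.ext (branch_shift y) }
  rw [fiberSum, ← e.tsum_eq]
  exact tsum_subtype {a | A a (x.1 0) = true} fun a => w (branch a x)

lemma measurable_fiberSum_shift {w : MarkovShift A → ℝ≥0∞} (hw : Measurable w) :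
    Measurable (fiberSum shift w) := by
  simp_rw [funext (fiberSum_shift w)]
  exact Measurable.tsum fun a =>
    (hw.comp (continuous_branch a).measurable).indicator (measurableSet_followers a)

lemma fiberSum_shift_le_tsum {w : MarkovShift A → ℝ≥0∞} {s : ℕ → ℝ≥0∞}
    (hw : ∀ y, w y ≤ s (y.1 0)) (x : MarkovShift A) : fiberSum shift w x ≤ ∑' a, s a := by
  rw [fiberSum_shift]
  refine ENNReal.tsum_le_tsum fun a => Set.indicator_apply_le' (fun hx => ?_) fun _ => zero_le
  exact (hw _).trans_eq (by rw [branch_apply_zero hx])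

end InverseBranches

section TransferOperator

/-- The transfer operator `L_g` acting on `[0, ∞]`-valued functions. -/
noncomputable def transfer (g : MarkovShift A → ℝ) (u : MarkovShift A → ℝ≥0∞) :
    MarkovShift A → ℝ≥0∞ :=
  fiberSum shift fun y => ennexp (g y) * u y

lemma birkhoff_add (f : MarkovShift A → ℝ) (m n : ℕ) (x : MarkovShift A) :
    birkhoff f (m + n) x = birkhoff f m x + birkhoff f n (shift^[m] x) :=
  birkhoffSum_add shift f m n x

lemma birkhoff_sub_const (f : MarkovShift A → ℝ) (p : ℝ) (n : ℕ) (x : MarkovShift A) :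
    birkhoff (fun y => f y - p) n x = birkhoff f n x - n * p := by
  simp [birkhoff, Finset.sum_sub_distrib]

lemma birkhoff_const_mul (c : ℝ) (f : MarkovShift A → ℝ) (n : ℕ) (x : MarkovShift A) :
    birkhoff (fun y => c * f y) n x = c * birkhoff f n x := by
  simp [birkhoff, Finset.mul_sum]

lemma transfer_mono (g : MarkovShift A → ℝ) : Monotone (transfer g) :=
  fun _ _ huv => fiberSum_mono _ fun _ => mul_le_mul_right (huv _) _

lemma transfer_iterate (g : MarkovShift A → ℝ) (n : ℕ) (u : MarkovShift A → ℝ≥0∞) :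
    (transfer g)^[n] u = fiberSum shift^[n] fun y => ennexp (birkhoff g n y) * u y := by
  induction n generalizing u with
  | zero => simp [birkhoff, fiberSum_id]
  | succ n ih =>
    rw [Function.iterate_succ_apply, ih, transfer, ← fiberSum_comp_mul, ← fiberSum_comp,
      ← Function.iterate_succ]
    congr 1 with y
    rw [add_comm n, birkhoff_add, add_comm, ennexp_add, mul_assoc]
    simp [birkhoff]

lemma transfer_iterate_add (g : MarkovShift A → ℝ) (n : ℕ) (u v : MarkovShift A → ℝ≥0∞) :
    (transfer g)^[n] (u + v) = (transfer g)^[n] u + (transfer g)^[n] v := by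
  ext x
  simp only [transfer_iterate, fiberSum, Pi.add_apply, mul_add, ENNReal.tsum_add]

lemma transfer_sub_const (g : MarkovShift A → ℝ) (p : ℝ) (u : MarkovShift A → ℝ≥0∞)
    (x : MarkovShift A) :
    transfer (fun y => g y - p) u x = ennexp (-p) * transfer g u x := by
  have hw : (fun y => ennexp (g y - p) * u y) = fun y => ennexp (-p) * (ennexp (g y) * u y) := by
    ext y
    rw [← mul_assoc, ← ennexp_add, neg_add_eq_sub]
  rw [transfer, hw]
  exact congrFun (fiberSum_comp_mul shift (fun _ => ennexp (-p)) _) x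

/-- The potential cohomologous to `g` whose transfer operator fixes `1` when `L_g` fixes `e^φ`. -/
def normalize (g φ : MarkovShift A → ℝ) (y : MarkovShift A) : ℝ := g y + (φ y - φ (shift y))

lemma transfer_normalize (g φ : MarkovShift A → ℝ) (u : MarkovShift A → ℝ≥0∞)
    (x : MarkovShift A) :
    transfer (normalize g φ) u x = ennexp (-φ x) * transfer g (fun y => ennexp (φ y) * u y) x := by
  have hw : (fun y => ennexp (normalize g φ y) * u y) =
      fun y => ennexp (-φ (shift y)) * (ennexp (g y) * (ennexp (φ y) * u y)) := by
    ext y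
    rw [normalize, ← add_sub_assoc, sub_eq_neg_add, ennexp_add, ennexp_add, mul_assoc, mul_assoc]
  rw [transfer, hw]
  exact congrFun (fiberSum_comp_mul shift (fun x => ennexp (-φ x)) _) x

lemma transfer_comp_shift (g : MarkovShift A → ℝ) (u : MarkovShift A → ℝ≥0∞) (x : MarkovShift A) :
    transfer g (u ∘ shift) x = u x * transfer g 1 x := by
  rw [transfer, transfer, ← congrFun (fiberSum_comp_mul shift u _) x]
  simp [mul_comm]

lemma toReal_transfer (g : MarkovShift A → ℝ) {u : MarkovShift A → ℝ} (hu : ∀ x, 0 ≤ u x)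
    (x : MarkovShift A) :
    (transfer g (fun y => ENNReal.ofReal (u y)) x).toReal = ruelle g u x := by
  rw [transfer, fiberSum, ENNReal.tsum_toReal_eq fun y => by
    exact ENNReal.mul_ne_top (ennexp_ne_top _) ENNReal.ofReal_ne_top]
  refine tsum_congr fun y => ?_
  rw [ENNReal.toReal_mul, toReal_ennexp, ENNReal.toReal_ofReal (hu _)]

lemma transfer_indicator_le {g : MarkovShift A → ℝ} {s : Set (MarkovShift A)} {a : ℕ} {C : ℝ}
    (hs : ∀ x ∈ s, x.1 0 = a) (hC : ∀ x, x.1 0 = a → g x ≤ C) (x : MarkovShift A) :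
    transfer g (s.indicator 1) x ≤ ennexp C := by
  rw [← tsum_pi_single a (ennexp C)]
  refine fiberSum_shift_le_tsum (fun y => ?_) x
  by_cases hy : y ∈ s
  · simpa [hy, hs y hy] using hC y (hs y hy)
  · simp [hy]

lemma transfer_ofReal_of_ruelle_pos {g : MarkovShift A → ℝ} {u : MarkovShift A → ℝ}
    (hu : ∀ x, 0 ≤ u x) {x : MarkovShift A} (hx : 0 < ruelle g u x) :
    transfer g (fun y => ENNReal.ofReal (u y)) x = ENNReal.ofReal (ruelle g u x) := by
  rw [← toReal_transfer g hu] at hx ⊢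
  exact (ENNReal.ofReal_toReal (ENNReal.toReal_pos_iff.1 hx).2.ne).symm

variable {g : MarkovShift A → ℝ}

lemma measurable_transfer (hg : Continuous g) {u : MarkovShift A → ℝ≥0∞} (hu : Measurable u) :
    Measurable (transfer g u) :=
  measurable_fiberSum_shift ((continuous_ennexp.comp hg).measurable.mul hu)

end TransferOperator

section Duality

/-- The measure `∫ ∑_{σ y = x} δ_y dν(x)`, obtained by lifting `ν` to all preimages. -/
noncomputable def preimageLift (ν : Measure (MarkovShift A)) : Measure (MarkovShift A) :=
  Measure.sum fun a => (ν.restrict (followers A a)).map (branch a)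

lemma lintegral_preimageLift (ν : Measure (MarkovShift A)) {w : MarkovShift A → ℝ≥0∞}
    (hw : Measurable w) : ∫⁻ x, w x ∂preimageLift ν = ∫⁻ x, fiberSum shift w x ∂ν := by
  have hbranch (a : ℕ) : Measurable (branch a : MarkovShift A → MarkovShift A) :=
    (continuous_branch a).measurable
  simp_rw [fiberSum_shift]
  rw [preimageLift, lintegral_sum_measure, lintegral_tsum fun a =>
    ((hw.comp (hbranch a)).indicator (measurableSet_followers a)).aemeasurable]
  refine tsum_congr fun a => ?_
  rw [lintegral_map hw (hbranch a), lintegral_indicator (measurableSet_followers a)]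
  rfl

/-- The dual transfer operator `L_g^*` on measures. -/
noncomputable def dualTransfer (g : MarkovShift A → ℝ) (ν : Measure (MarkovShift A)) :
    Measure (MarkovShift A) :=
  (preimageLift ν).withDensity fun x => ennexp (g x)

variable {g : MarkovShift A → ℝ} {ν : Measure (MarkovShift A)}

lemma lintegral_dualTransfer (hg : Continuous g) {u : MarkovShift A → ℝ≥0∞} (hu : Measurable u) :
    ∫⁻ x, u x ∂dualTransfer g ν = ∫⁻ x, transfer g u x ∂ν := by
  have hexp : Measurable fun x => ennexp (g x) := (continuous_ennexp.comp hg).measurable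
  rw [dualTransfer, lintegral_withDensity_eq_lintegral_mul _ hexp hu,
    lintegral_preimageLift ν (hexp.mul hu)]
  rfl

lemma lintegral_transfer_iterate (hg : Continuous g) (hν : dualTransfer g ν = ν) (n : ℕ)
    {u : MarkovShift A → ℝ≥0∞} (hu : Measurable u) :
    ∫⁻ x, (transfer g)^[n] u x ∂ν = ∫⁻ x, u x ∂ν := by
  induction n generalizing u with
  | zero => rfl
  | succ n ih =>
    rw [Function.iterate_succ_apply, ih (measurable_transfer hg hu),
      ← lintegral_dualTransfer hg hu, hν]

lemma dualTransfer_eq_self [IsFiniteMeasure ν] (hg : Continuous g)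
    (hdual : ∀ (s : Set (MarkovShift A)) (a : ℕ), IsClopen s → (∀ x ∈ s, x.1 0 = a) →
      ∫⁻ x, transfer g (s.indicator 1) x ∂ν = ν s) :
    dualTransfer g ν = ν := by
  let symbolSet (a : ℕ) : Set (MarkovShift A) := {x | x.1 0 = a}
  have hsymbol (a : ℕ) : IsClopen (symbolSet a) :=
    (isClopen_discrete {a}).preimage (continuous_coord 0)
  refine (Measure.ext_of_generateFrom_of_iUnion _ symbolSet
    (BorelSpace.measurable_eq.trans isTopologicalBasis_isClopen_subset_symbol.borel_eq_generateFrom)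
    ?_ ?_ (fun a => ⟨hsymbol a, a, fun x hx => hx⟩) (fun a => measure_ne_top _ _) ?_).symm
  · rintro s ⟨hs, a, ha⟩ t ⟨ht, -⟩ -
    exact ⟨hs.inter ht, a, fun x hx => ha x hx.1⟩
  · exact Set.iUnion_eq_univ_iff.2 fun x => ⟨x.1 0, rfl⟩
  · rintro s ⟨hs, a, ha⟩
    rw [← hdual s a hs ha, ← lintegral_indicator_one hs.isOpen.measurableSet,
      lintegral_dualTransfer hg (measurable_one.indicator hs.isOpen.measurableSet)]

lemma IsRPF.dualTransfer_eq {f h : MarkovShift A → ℝ} {p : ℝ} (hRPF : IsRPF f p h ν)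
    (hf : Continuous f) (hbdd : ∀ a, BddAbove (f '' {x | x.1 0 = a})) :
    dualTransfer (fun x => f x - p) ν = ν := by
  obtain ⟨-, -, -, _, hdual, -⟩ := hRPF
  refine dualTransfer_eq_self (by fun_prop) fun s a hs ha => ?_
  have hsmeas : MeasurableSet s := hs.isOpen.measurableSet
  obtain ⟨C, hC⟩ := hbdd a
  have hle := transfer_indicator_le ha fun x hx => hC ⟨x, hx, rfl⟩
  have hofReal : (fun x => ENNReal.ofReal (s.indicator 1 x)) = (s.indicator 1 : _ → ℝ≥0∞) := by
    ext x
    by_cases hx : x ∈ s <;> simp [hx]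
  have htoReal : (∫⁻ x, transfer f (s.indicator 1) x ∂ν).toReal = (ennexp p * ν s).toReal := by
    rw [← integral_toReal (measurable_transfer hf (measurable_one.indicator hsmeas)).aemeasurable
      (ae_of_all _ fun x => (hle x).trans_lt (ennexp_ne_top C).lt_top), ENNReal.toReal_mul,
      toReal_ennexp, ← measureReal_def, ← integral_indicator_one hsmeas,
      ← hdual _ (continuous_one.indicator (by simp [hs.frontier_eq])) ⟨1, fun x => ?_⟩, ← hofReal]
    · exact integral_congr_ae <| ae_of_all _ fun x =>
        toReal_transfer f (Set.indicator_nonneg fun _ _ => zero_le_one) x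
    · by_cases hx : x ∈ s <;> simp [hx]
  have hfin : ∫⁻ x, transfer f (s.indicator 1) x ∂ν ≠ ∞ :=
    ((lintegral_mono hle).trans_lt (by simp [(ennexp_ne_top C).lt_top])).ne
  simp_rw [transfer_sub_const]
  rw [lintegral_const_mul' _ _ (ennexp_ne_top _),
    (ENNReal.toReal_eq_toReal_iff' hfin
      (ENNReal.mul_ne_top (ennexp_ne_top _) (measure_ne_top _ _))).1 htoReal,
    ← mul_assoc, ← ennexp_add]
  simp

end Duality

section Connections

lemma exists_prepend (w : List ℕ) (a : ℕ) (y : MarkovShift A)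
    (hw : (a :: (w ++ [y.1 0])).IsChain fun u v => A u v = true) :
    ∃ x : MarkovShift A, x.1 0 = a ∧ shift^[w.length + 1] x = y ∧
      ∀ i < w.length, x.1 (i + 1) ∈ w := by
  induction w generalizing a with
  | nil =>
    have ha : A a (y.1 0) = true := by simpa using hw
    exact ⟨branch a y, branch_apply_zero ha, shift_branch ha, by simp⟩
  | cons b w ih =>
    obtain ⟨hab, hchain⟩ := List.isChain_cons_cons.1 hw
    obtain ⟨x, rfl, hx, hmem⟩ := ih b hchain
    refine ⟨branch a x, branch_apply_zero hab, ?_, fun i hi => ?_⟩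
    · rw [List.length_cons, Function.iterate_succ_apply, shift_branch hab, hx]
    · rw [branch_apply_succ hab]
      cases i with
      | zero => exact List.mem_cons_self
      | succ i => exact List.mem_cons_of_mem _ (hmem i (by simpa using hi))

/-- Quantitative form of the BIP property: every word extends to any prescribed tail through exactly
`K` symbols of the finite set `F`. -/
def Connects (A : ℕ → ℕ → Bool) (K : ℕ) (F : Finset ℕ) : Prop :=
  ∀ (z y : MarkovShift A) (n : ℕ), 0 < n →
    ∃ x ∈ cylOf z n, shift^[n + K] x = y ∧ ∀ i < K, x.1 (n + i) ∈ F

variable {K : ℕ} {F : Finset ℕ}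

lemma connects_of_forall_symbol
    (h : ∀ z y : MarkovShift A, ∃ x : MarkovShift A, x.1 0 = z.1 0 ∧ shift^[K + 1] x = y ∧
      ∀ i < K, x.1 (i + 1) ∈ F) :
    Connects A K F := by
  intro z y n hn
  induction n, hn using Nat.le_induction generalizing z with
  | base =>
    obtain ⟨x, hx0, hxy, hxF⟩ := h z y
    exact ⟨x, by simpa [cylOf] using hx0, by rwa [add_comm], fun i hi => add_comm i 1 ▸ hxF i hi⟩
  | succ n hn ih =>
    obtain ⟨x, hx, hxy, hxF⟩ := ih (shift z)
    have hz : A (z.1 0) (x.1 0) = true := by rw [hx 0 hn]; exact z.2 0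
    refine ⟨branch (z.1 0) x, fun i hi => ?_, ?_, fun i hi => ?_⟩
    · cases i with
      | zero => rw [branch_apply_zero hz]
      | succ i => rw [branch_apply_succ hz, hx i (by omega), shift_apply]
    · rw [add_right_comm, Function.iterate_succ_apply, shift_branch hz, hxy]
    · rw [add_right_comm, branch_apply_succ hz]
      exact hxF i hi

/-- Connecting twice, through the symbol of `o`, makes the number of connecting symbols positive. -/
lemma FinitelyPrimitive.exists_connects (hA : FinitelyPrimitive A) (o : MarkovShift A) :
    ∃ K F, 0 < K ∧ Connects A K F := by
  obtain ⟨K₀, F, hword⟩ := hA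
  have hconn (z y : MarkovShift A) : ∃ x : MarkovShift A,
      x.1 0 = z.1 0 ∧ shift^[K₀ + 1] x = y ∧ ∀ i < K₀, x.1 (i + 1) ∈ F := by
    obtain ⟨w, rfl, hwF, hchain⟩ := hword (z.1 0) (y.1 0) ⟨z, rfl⟩ ⟨y, rfl⟩
    obtain ⟨x, hxz, hxy, hxw⟩ := exists_prepend w (z.1 0) y hchain
    exact ⟨x, hxz, hxy, fun i hi => hwF _ (hxw i hi)⟩
  refine ⟨K₀ + 1 + K₀, insert (o.1 0) F, by omega, connects_of_forall_symbol fun z y => ?_⟩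
  obtain ⟨y', hy'0, hy'y, hy'F⟩ := hconn o y
  obtain ⟨x, hx0, rfl, hxF⟩ := hconn z y'
  simp only [shift_iterate_apply] at hy'0 hy'F
  refine ⟨x, hx0, ?_, fun i hi => Finset.mem_insert.2 ?_⟩
  · rwa [← Function.iterate_add_apply] at hy'y
  rcases lt_trichotomy i K₀ with hi' | rfl | hi'
  · exact .inr (hxF i hi')
  · exact .inl (by rw [← hy'0, zero_add])
  · refine .inr ?_
    convert hy'F (i - K₀ - 1) (by omega) using 2
    omega

lemma Connects.exists_finset (hKF : Connects A K F) (hK : 0 < K) :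
    ∃ Z : Finset (MarkovShift A), ∀ x : MarkovShift A, ∃ z ∈ Z, z ∈ followers A (x.1 0) := by
  classical
  let S : Finset ℕ := F.filter (Admissible A)
  choose p hp using fun a : S => (Finset.mem_filter.1 a.2).2
  refine ⟨Finset.univ.image p, fun x => ?_⟩
  obtain ⟨y, hy, -, hyF⟩ := hKF x x 1 one_pos
  have hyS : y.1 1 ∈ S := Finset.mem_filter.2 ⟨hyF 0 hK, shift y, rfl⟩
  refine ⟨_, Finset.mem_image_of_mem p (Finset.mem_univ ⟨y.1 1, hyS⟩), ?_⟩
  rw [followers, Set.mem_ofPred_eq, hp, ← hy 0 one_pos]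
  exact y.2 0

end Connections

section Distortion

/-- Bowen's property: Birkhoff sums of length `n` vary by at most `D` on cylinders of length `n`. It
is stated one-sidedly because `x ∈ cylOf y n ↔ y ∈ cylOf x n`. -/
def HasBowenBound (f : MarkovShift A → ℝ) (D : ℝ) : Prop :=
  ∀ n x, ∀ y ∈ cylOf x n, birkhoff f n x ≤ birkhoff f n y + D

variable {f g : MarkovShift A → ℝ} {D Q : ℝ} {K : ℕ} {F : Finset ℕ}

lemma exists_hasBowenBound (hf : BddAbove (waltersSet f 0)) : ∃ D, HasBowenBound f D := by
  obtain ⟨D, hD⟩ := hf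
  refine ⟨max D 0, fun n x y hy => ?_⟩
  rcases n.eq_zero_or_pos with rfl | hn
  · simp [birkhoff]
  · have hxy : |birkhoff f n x - birkhoff f n y| ≤ D :=
      hD ⟨n, hn, x, y, fun i hi => (hy i hi).symm, rfl⟩
    linarith [le_abs_self (birkhoff f n x - birkhoff f n y), le_max_left D 0]

lemma HasBowenBound.const_mul (hf : HasBowenBound f D) {c : ℝ} (hc : 0 ≤ c) :
    HasBowenBound (fun x => c * f x) (c * D) := by
  intro n x y hy
  rw [birkhoff_const_mul, birkhoff_const_mul, ← mul_add]
  exact mul_le_mul_of_nonneg_left (hf n x y hy) hc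

lemma HasBowenBound.sub_const (hf : HasBowenBound f D) (p : ℝ) :
    HasBowenBound (fun x => f x - p) D := by
  intro n x y hy
  rw [birkhoff_sub_const, birkhoff_sub_const]
  linarith [hf n x y hy]

lemma HasBowenBound.le_add (hf : HasBowenBound f D) {x y : MarkovShift A} (hxy : y.1 0 = x.1 0) :
    f x ≤ f y + D := by
  simpa [birkhoff] using hf 1 x y (by simpa [cylOf] using hxy)

lemma HasBowenBound.bddAbove_image (hf : HasBowenBound f D) (a : ℕ) :
    BddAbove (f '' {x | x.1 0 = a}) := by
  by_cases ha : ∃ y : MarkovShift A, y.1 0 = a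
  · obtain ⟨y, rfl⟩ := ha
    exact ⟨f y + D, by rintro _ ⟨x, hx, rfl⟩; exact hf.le_add hx.symm⟩
  · exact ⟨0, by rintro _ ⟨x, hx, rfl⟩; exact (ha ⟨x, hx⟩).elim⟩

lemma HasBowenBound.exists_lowerBound (hf : HasBowenBound f D) (F : Finset ℕ) :
    ∃ Q, ∀ x : MarkovShift A, x.1 0 ∈ F → -Q ≤ f x := by
  have hbdd : BddBelow (⋃ a ∈ F, f '' {x | x.1 0 = a}) := by
    refine (F.finite_toSet.bddBelow_biUnion).2 fun a _ => ?_
    by_cases ha : ∃ y : MarkovShift A, y.1 0 = a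
    · obtain ⟨y, rfl⟩ := ha
      exact ⟨f y - D, by rintro _ ⟨x, hx, rfl⟩; linarith [hf.le_add (x := y) (y := x) hx]⟩
    · exact ⟨0, by rintro _ ⟨x, hx, rfl⟩; exact (ha ⟨x, hx⟩).elim⟩
  obtain ⟨q, hq⟩ := hbdd
  exact ⟨-q, fun x hx => (neg_neg q).symm ▸ hq (Set.mem_biUnion hx ⟨x, rfl, rfl⟩)⟩

lemma neg_mul_le_birkhoff (hQ : ∀ x : MarkovShift A, x.1 0 ∈ F → -Q ≤ g x) {x : MarkovShift A}
    (hx : ∀ i < K, x.1 i ∈ F) : -(K * Q) ≤ birkhoff g K x := by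
  calc -(K * Q) = ∑ _j ∈ Finset.range K, -Q := by simp
    _ ≤ birkhoff g K x := Finset.sum_le_sum fun j hj => hQ _ ?_
  rw [shift_iterate_apply, zero_add]
  exact hx j (by simpa using hj)

/-- Every `n`-fold preimage `z` of `x` is shadowed by an `(n + K)`-fold preimage of `y` in the same
`n`-cylinder, injectively in `z`. -/
lemma Connects.transfer_iterate_le (hKF : Connects A K F) (hD : HasBowenBound g D)
    (hQ : ∀ x, x.1 0 ∈ F → -Q ≤ g x) {n : ℕ} (hn : 0 < n) {u v : MarkovShift A → ℝ≥0∞}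
    (huv : ∀ z, ∀ z' ∈ cylOf z n, v z ≤ u z') (x y : MarkovShift A) :
    ennexp (-(D + K * Q)) * (transfer g)^[n] v x ≤ (transfer g)^[n + K] u y := by
  choose s hcyl hshift hF using fun z => hKF z y n hn
  rw [transfer_iterate, transfer_iterate, fiberSum, fiberSum, ← ENNReal.tsum_mul_left]
  let s' (z : shift^[n] ⁻¹' {x}) : shift^[n + K] ⁻¹' {y} := ⟨s z, hshift z⟩
  have hs' : Function.Injective s' := by
    rintro ⟨a, rfl⟩ ⟨b, hb⟩ hab
    have hsab : s a = s b := congrArg Subtype.val hab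
    refine Subtype.ext (Subtype.ext (funext fun i => ?_))
    rcases lt_or_ge i n with hi | hi
    · rw [← hcyl a i hi, ← hcyl b i hi, hsab]
    · obtain ⟨j, rfl⟩ := Nat.exists_eq_add_of_le' hi
      rw [← shift_iterate_apply, ← shift_iterate_apply, show shift^[n] b = shift^[n] a from hb]
  refine le_trans (ENNReal.tsum_le_tsum fun z => ?_) (ENNReal.tsum_comp_le_tsum_of_injective hs' _)
  have hbirk : -(D + K * Q) + birkhoff g n z ≤ birkhoff g (n + K) (s z) := by
    have htail : -(K * Q) ≤ birkhoff g K (shift^[n] (s z)) :=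
      neg_mul_le_birkhoff hQ fun i hi => by
        rw [shift_iterate_apply, add_comm]; exact hF z i hi
    rw [birkhoff_add]
    linarith [hD n z (s z) (hcyl z)]
  rw [← mul_assoc, ← ennexp_add]
  exact mul_le_mul' (ennexp_le_ennexp.2 hbirk) (huv _ _ (hcyl z))

end Distortion

section CylinderInfimum

/-- The infimum of `H` over the cylinder of length `n` containing a point. -/
noncomputable def cylInf (H : MarkovShift A → ℝ≥0∞) (n : ℕ) (x : MarkovShift A) : ℝ≥0∞ :=
  ⨅ y ∈ cylOf x n, H y

variable {H : MarkovShift A → ℝ≥0∞}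

lemma cylInf_le {n : ℕ} {x y : MarkovShift A} (hy : y ∈ cylOf x n) : cylInf H n x ≤ H y :=
  iInf₂_le y hy

lemma cylOf_eq_of_mem {n : ℕ} {x y : MarkovShift A} (hy : y ∈ cylOf x n) :
    cylOf y n = cylOf x n :=
  Set.ext fun _ => forall₂_congr fun i hi => by rw [hy i hi]

lemma measurable_cylInf (n : ℕ) : Measurable (cylInf H n) :=
  (isLocallyConstant_of_cylOf n fun _ _ hy => by
    rw [cylInf, cylInf, cylOf_eq_of_mem hy]).continuous.measurable

lemma tendsto_cylInf (hH : Continuous H) (x : MarkovShift A) :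
    Tendsto (fun n => cylInf H n x) atTop (𝓝 (H x)) := by
  refine tendsto_order.2 ⟨fun b hb => ?_, fun b hb =>
    .of_forall fun n => (cylInf_le (self_mem_cylOf x n)).trans_lt hb⟩
  obtain ⟨c, hbc, hc⟩ := exists_between hb
  obtain ⟨n, -, hn⟩ := (nhds_hasBasis_cylOf x).mem_iff.1 (hH.continuousAt.eventually_const_lt hc)
  filter_upwards [eventually_ge_atTop n] with m hm
  exact hbc.trans_le (le_iInf₂ fun y hy => (hn fun i hi => hy i (hi.trans_le hm) : c < H y).le)

lemma tendsto_lintegral_sub_cylInf {ν : Measure (MarkovShift A)} (hH : Continuous H)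
    (hint : ∫⁻ x, H x ∂ν ≠ ∞) :
    Tendsto (fun n => ∫⁻ x, (H x - cylInf H n x) ∂ν) atTop (𝓝 0) := by
  rw [← lintegral_zero (μ := ν)]
  refine tendsto_lintegral_of_dominated_convergence H
    (fun n => hH.measurable.sub (measurable_cylInf n)) (fun n => ae_of_all _ fun x => tsub_le_self)
    hint ?_
  filter_upwards [ae_lt_top hH.measurable hint] with x hx
  simpa using ENNReal.Tendsto.sub tendsto_const_nhds (tendsto_cylInf hH x) (.inl hx.ne)

end CylinderInfimum

section Harnack

variable {g : MarkovShift A → ℝ} {D Q : ℝ} {K : ℕ} {F : Finset ℕ} {ν : Measure (MarkovShift A)}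

lemma isOpenPosMeasure_of_dualTransfer_eq_self [IsProbabilityMeasure ν] (hKF : Connects A K F)
    (hD : HasBowenBound g D) (hQ : ∀ x, x.1 0 ∈ F → -Q ≤ g x) (hg : Continuous g)
    (hν : dualTransfer g ν = ν) : ν.IsOpenPosMeasure := by
  refine ⟨?_⟩
  rintro U hU ⟨x, hx⟩ hU0
  obtain ⟨n, -, hn⟩ := (nhds_hasBasis_cylOf x).mem_iff.1 (hU.mem_nhds hx)
  let C := cylOf x (n + 1)
  have hC : MeasurableSet C := (isClopen_cylOf x _).isOpen.measurableSet
  have hC0 : ν C = 0 :=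
    measure_mono_null (fun y hy => hn fun i hi => hy i (hi.trans n.lt_succ_self)) hU0
  have hle : ennexp (-(D + K * Q)) * (transfer g)^[n + 1] (C.indicator 1) (shift^[n + 1] x) ≤ 0 :=
    calc _ = ∫⁻ _, ennexp (-(D + K * Q)) *
          (transfer g)^[n + 1] (C.indicator 1) (shift^[n + 1] x) ∂ν := by simp
      _ ≤ ∫⁻ y, (transfer g)^[n + 1 + K] (C.indicator 1) y ∂ν := by
        refine lintegral_mono (hKF.transfer_iterate_le hD hQ n.succ_pos (fun z z' hz' => ?_) _)
        refine Set.indicator_apply_le' (fun hz => ?_) fun _ => zero_le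
        rw [Set.indicator_of_mem ((cylOf_eq_of_mem hz).subset hz')]
        rfl
      _ = 0 := by
        rw [lintegral_transfer_iterate hg hν _ (measurable_one.indicator hC),
          lintegral_indicator_one hC, hC0]
  have hpos : ennexp (birkhoff g (n + 1) x) ≤
      (transfer g)^[n + 1] (C.indicator 1) (shift^[n + 1] x) := by
    rw [transfer_iterate]
    refine le_trans ?_ (ENNReal.le_tsum ⟨x, rfl⟩)
    simp [C, self_mem_cylOf]
  exact ennexp_ne_zero _ (le_zero_iff.1 <| hpos.trans_eq <|
    (mul_eq_zero.1 (le_zero_iff.1 hle)).resolve_left (ennexp_ne_zero _))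

/-- Harnack inequality: the transfer operator compares `cylInf H n` at any `x` with `H` at any `y`,
and in the limit `n → ∞` this becomes a comparison of `H x` with `H y` for almost every `x`. -/
theorem Connects.harnack [IsProbabilityMeasure ν] (hKF : Connects A K F)
    (hD : HasBowenBound g D) (hQ : ∀ x, x.1 0 ∈ F → -Q ≤ g x) (hg : Continuous g)
    (hν : dualTransfer g ν = ν) {H : MarkovShift A → ℝ≥0∞} (hH : Continuous H)
    (hfix : transfer g H = H) (hint : ∫⁻ x, H x ∂ν ≠ ∞) (x y : MarkovShift A) :
    ennexp (-(D + K * Q)) * H x ≤ H y := by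
  set c := ennexp (-(D + K * Q))
  have hctop : c ≠ ∞ := ennexp_ne_top _
  have hdiff (n : ℕ) : Measurable fun x => H x - cylInf H n x :=
    hH.measurable.sub (measurable_cylInf n)
  have hpointwise (n : ℕ) (hn : 0 < n) (x : MarkovShift A) :
      c * H x - H y ≤ c * (transfer g)^[n] (fun z => H z - cylInf H n z) x := by
    have hsplit : H x ≤ (transfer g)^[n] (cylInf H n) x +
        (transfer g)^[n] (fun z => H z - cylInf H n z) x := by
      rw [← Pi.add_apply, ← transfer_iterate_add, ← congrFun (Function.iterate_fixed hfix n) x]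
      exact (transfer_mono g).iterate n (fun z => le_add_tsub) x
    have hcyl : c * (transfer g)^[n] (cylInf H n) x ≤ H y := by
      refine (hKF.transfer_iterate_le hD hQ hn (fun z z' hz' => cylInf_le hz') x y).trans_eq ?_
      rw [Function.iterate_fixed hfix]
    refine tsub_le_iff_left.2 ((mul_le_mul_right hsplit c).trans ?_)
    rw [mul_add]
    exact add_le_add_left hcyl _
  have hbound (n : ℕ) (hn : 0 < n) :
      ∫⁻ x, (c * H x - H y) ∂ν ≤ c * ∫⁻ x, (H x - cylInf H n x) ∂ν := by
    refine (lintegral_mono (hpointwise n hn)).trans_eq ?_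
    rw [lintegral_const_mul' _ _ hctop, lintegral_transfer_iterate hg hν n (hdiff n)]
  have hzero : ∫⁻ x, (c * H x - H y) ∂ν = 0 := by
    refine le_zero_iff.1 (ge_of_tendsto ?_ ((eventually_gt_atTop 0).mono hbound))
    simpa using ENNReal.Tendsto.const_mul (tendsto_lintegral_sub_cylInf hH hint)
      (.inr hctop)
  have hcH : Continuous fun x => c * H x := (ENNReal.continuous_const_mul hctop).comp hH
  have hae : ∀ᵐ x ∂ν, x ∈ {x | c * H x ≤ H y} := by
    filter_upwards [(lintegral_eq_zero_iff (hcH.measurable.sub_const _)).1 hzero] with x hx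
    exact tsub_eq_zero_iff_le.1 hx
  have := isOpenPosMeasure_of_dualTransfer_eq_self hKF hD hQ hg hν
  have huniv := ((isClosed_le hcH continuous_const).ae_eq_univ_iff_eq).1 (eventuallyEq_univ.2 hae)
  exact huniv.ge (Set.mem_univ x)

end Harnack

section NormalizedPotential

variable {g φ ψ : MarkovShift A → ℝ} {μ ν : Measure (MarkovShift A)}

lemma continuous_normalize (hg : Continuous g) (hφ : Continuous φ) :
    Continuous (normalize g φ) :=
  hg.add (hφ.sub (hφ.comp continuous_shift))

lemma transfer_normalize_one (hfix : transfer g (fun x => ennexp (φ x)) = fun x => ennexp (φ x)) :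
    transfer (normalize g φ) 1 = 1 := by
  ext x
  simp [transfer_normalize, hfix, ← ennexp_add]

lemma dualTransfer_normalize (hg : Continuous g) (hφ : Continuous φ) (hν : dualTransfer g ν = ν) :
    dualTransfer (normalize g φ) (ν.withDensity fun x => ennexp (φ x)) =
      ν.withDensity fun x => ennexp (φ x) := by
  have hexp : Measurable fun x => ennexp (φ x) := (continuous_ennexp.comp hφ).measurable
  have hψ : Continuous (normalize g φ) := continuous_normalize hg hφ
  refine Measure.ext_of_lintegral _ fun u hu => ?_
  rw [lintegral_dualTransfer hψ hu,
    lintegral_withDensity_eq_lintegral_mul _ hexp (measurable_transfer hψ hu),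
    lintegral_withDensity_eq_lintegral_mul _ hexp hu]
  calc ∫⁻ x, ennexp (φ x) * transfer (normalize g φ) u x ∂ν
      = ∫⁻ x, transfer g (fun y => ennexp (φ y) * u y) x ∂ν := by
        simp_rw [transfer_normalize, ← mul_assoc, ← ennexp_add]
        simp
    _ = ∫⁻ x, ennexp (φ x) * u x ∂ν := by
        rw [← lintegral_dualTransfer (u := fun x => ennexp (φ x) * u x) hg (hexp.mul hu), hν]

lemma nonpos_of_transfer_one (hψ : transfer ψ 1 = 1) (x : MarkovShift A) : ψ x ≤ 0 := by
  rw [← ennexp_le_ennexp, ennexp_zero]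
  calc ennexp (ψ x) = ennexp (ψ x) * 1 := (mul_one _).symm
    _ ≤ transfer ψ 1 (shift x) :=
      ENNReal.le_tsum (f := fun y : shift ⁻¹' {shift x} => ennexp (ψ y) * 1) ⟨x, rfl⟩
    _ = 1 := by rw [hψ, Pi.one_apply]

lemma map_shift_eq_self (hcont : Continuous ψ) (hψ : transfer ψ 1 = 1)
    (hμ : dualTransfer ψ μ = μ) : μ.map shift = μ := by
  refine Measure.ext_of_lintegral _ fun u hu => ?_
  rw [lintegral_map hu continuous_shift.measurable]
  calc ∫⁻ x, u (shift x) ∂μ = ∫⁻ x, transfer ψ (u ∘ shift) x ∂μ := by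
        rw [← lintegral_dualTransfer hcont (hu.comp continuous_shift.measurable), hμ]; rfl
    _ = ∫⁻ x, u x ∂μ := by simp [transfer_comp_shift, hψ]

variable [IsProbabilityMeasure μ] {s : ℕ → ℝ≥0∞}

lemma lintegral_le_tsum (hcont : Continuous ψ) (hμ : dualTransfer ψ μ = μ)
    {u : MarkovShift A → ℝ≥0∞} (hu : Measurable u)
    (hs : ∀ y, ennexp (ψ y) * u y ≤ s (y.1 0)) : ∫⁻ x, u x ∂μ ≤ ∑' a, s a :=
  calc ∫⁻ x, u x ∂μ = ∫⁻ x, transfer ψ u x ∂μ := by rw [← lintegral_dualTransfer hcont hu, hμ]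
    _ ≤ ∫⁻ _, ∑' a, s a ∂μ := lintegral_mono (fiberSum_shift_le_tsum hs)
    _ = ∑' a, s a := by simp

lemma measure_symbol_le (hcont : Continuous ψ) (hμ : dualTransfer ψ μ = μ)
    (hs : ∀ y, ennexp (ψ y) ≤ s (y.1 0)) (a : ℕ) : μ {x | x.1 0 = a} ≤ s a := by
  have hmeas : MeasurableSet {x : MarkovShift A | x.1 0 = a} :=
    (continuous_coord 0).measurable (measurableSet_singleton a)
  rw [← lintegral_indicator_one hmeas, ← tsum_pi_single a (s a)]
  refine lintegral_le_tsum hcont hμ (measurable_one.indicator hmeas) fun y => ?_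
  by_cases hy : y.1 0 = a
  · subst hy
    simpa using hs y
  · simp [hy]

lemma lintegral_neg_le_tsum (hcont : Continuous ψ) (hμ : dualTransfer ψ μ = μ)
    (hs : ∀ y, ennexp (ψ y / 2) ≤ s (y.1 0)) :
    ∫⁻ x, ENNReal.ofReal (-ψ x) ∂μ ≤ 2 * ∑' a, s a := by
  rw [← ENNReal.tsum_mul_left]
  exact lintegral_le_tsum hcont hμ hcont.neg.measurable.ennreal_ofReal fun y =>
    (ennexp_mul_ofReal_neg_le (ψ y)).trans (mul_le_mul_right (hs y) 2)

end NormalizedPotential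

section AlmostMaximizing

/-- Invariant probability measures whose `f`-average is within `ε` of all others. -/
structure IsAlmostMaximizing (f : MarkovShift A → ℝ) (ε : ℝ) (μ : Measure (MarkovShift A)) :
    Prop where
  isInvariantProb : IsInvariantProb μ
  integrable : Integrable f μ
  integral_le : ∀ m, IsInvariantProb m → Integrable f m → ∫ x, f x ∂m ≤ ∫ x, f x ∂μ + ε

variable {f g φ : MarkovShift A → ℝ} {μ m : Measure (MarkovShift A)}

lemma IsInvariantProb.measurePreserving (hm : IsInvariantProb m) : MeasurePreserving shift m m :=
  ⟨continuous_shift.measurable, hm.2⟩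

lemma BoundedFun.integrable [IsFiniteMeasure m] (hφ : BoundedFun φ) (hcont : Continuous φ) :
    Integrable φ m :=
  let ⟨C, hC⟩ := hφ
  .of_bound hcont.aestronglyMeasurable C (ae_of_all _ hC)

lemma IsInvariantProb.integrable_coboundary (hm : IsInvariantProb m) (hcont : Continuous φ)
    (hφ : BoundedFun φ) : Integrable (fun x => φ x - φ (shift x)) m :=
  have := hm.1
  (hφ.integrable hcont).sub (hm.measurePreserving.integrable_comp_of_integrable
    (hφ.integrable hcont))

lemma IsInvariantProb.integral_coboundary (hm : IsInvariantProb m) (hcont : Continuous φ)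
    (hφ : BoundedFun φ) : ∫ x, (φ x - φ (shift x)) ∂m = 0 := by
  have := hm.1
  have hint : Integrable φ m := hφ.integrable hcont
  have hshift : ∫ x, φ (shift x) ∂m = ∫ x, φ x ∂m := by
    rw [← integral_map continuous_shift.measurable.aemeasurable hcont.aestronglyMeasurable, hm.2]
  exact (integral_sub hint (hm.measurePreserving.integrable_comp_of_integrable hint)).trans
    (sub_eq_zero.2 hshift.symm)

lemma IsInvariantProb.integrable_normalize_iff (hm : IsInvariantProb m) (hcont : Continuous φ)
    (hφ : BoundedFun φ) : Integrable (normalize g φ) m ↔ Integrable g m :=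
  integrable_add_iff_integrable_left' (hm.integrable_coboundary hcont hφ)

lemma IsInvariantProb.integral_normalize (hm : IsInvariantProb m) (hcont : Continuous φ)
    (hφ : BoundedFun φ) (hg : Integrable g m) :
    ∫ x, normalize g φ x ∂m = ∫ x, g x ∂m := by
  simp only [normalize]
  rw [integral_add hg (hm.integrable_coboundary hcont hφ), hm.integral_coboundary hcont hφ,
    add_zero]

lemma IsInvariantProb.integral_normalize_mul_sub (hm : IsInvariantProb m) (hcont : Continuous φ)
    (hφ : BoundedFun φ) (hf : Integrable f m) (β p : ℝ) :
    ∫ x, normalize (fun x => β * f x - p) φ x ∂m = β * ∫ x, f x ∂m - p := by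
  have := hm.1
  have hβf : Integrable (fun x => β * f x) m := hf.const_mul β
  have hg : Integrable (fun x => β * f x - p) m := hβf.sub (integrable_const p)
  rw [hm.integral_normalize hcont hφ hg, integral_sub hβf (integrable_const p),
    integral_const_mul, integral_const, probReal_univ, one_smul]

/-- Since `ψ ≤ 0`, no invariant measure has `∫ ψ > 0`, whereas `∫ ψ dμ ≥ -E`; the pressure and the
coboundary contribute equally to all invariant measures. -/
lemma isAlmostMaximizing_of_normalize (hμ : IsInvariantProb μ) {β p : ℝ} (hβ : 0 < β)
    (hf : Continuous f) (hcont : Continuous φ) (hφ : BoundedFun φ) {ψ : MarkovShift A → ℝ}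
    (hψ : ψ = normalize (fun x => β * f x - p) φ) (hψ0 : ∀ x, ψ x ≤ 0) {E : ℝ≥0∞} (hE : E ≠ ∞)
    (hint : ∫⁻ x, ENNReal.ofReal (-ψ x) ∂μ ≤ E) : IsAlmostMaximizing f (E.toReal / β) μ := by
  have := hμ.1
  have hψcont : Continuous ψ := hψ ▸ continuous_normalize (by fun_prop) hcont
  have hneg : 0 ≤ᵐ[μ] fun x => -ψ x := ae_of_all _ fun x => neg_nonneg.2 (hψ0 x)
  have hψint : Integrable ψ μ := integrable_neg_iff.1
    ⟨hψcont.neg.aestronglyMeasurable,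
      (hasFiniteIntegral_iff_ofReal hneg).2 (hint.trans_lt hE.lt_top)⟩
  have hgint : Integrable (fun x => β * f x - p) μ :=
    (hμ.integrable_normalize_iff hcont hφ).1 (hψ ▸ hψint)
  have hfint : Integrable f μ := by
    refine ((hgint.add (integrable_const p)).const_mul β⁻¹).congr (ae_of_all _ fun x => ?_)
    simp [hβ.ne']
  have hlower : -(β * ∫ x, f x ∂μ - p) ≤ E.toReal := by
    rw [← hμ.integral_normalize_mul_sub hcont hφ hfint, ← hψ, ← integral_neg,
      integral_eq_lintegral_of_nonneg_ae hneg hψcont.neg.aestronglyMeasurable]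
    exact ENNReal.toReal_mono hE hint
  refine ⟨hμ, hfint, fun m hm hfm => ?_⟩
  have hupper : β * ∫ x, f x ∂m - p ≤ 0 := by
    rw [← hm.integral_normalize_mul_sub hcont hφ hfm, ← hψ]
    exact integral_nonpos hψ0
  rw [← sub_le_iff_le_add', le_div_iff₀ hβ]
  linarith

end AlmostMaximizing

section GibbsMeasure

variable {f h : MarkovShift A → ℝ} {p : ℝ} {ν : Measure (MarkovShift A)}

lemma IsRPF.continuous (hRPF : IsRPF f p h ν) : Continuous h := hRPF.1

lemma IsRPF.pos (hRPF : IsRPF f p h ν) (x : MarkovShift A) : 0 < h x := hRPF.2.1 x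

lemma IsRPF.isProbabilityMeasure (hRPF : IsRPF f p h ν) : IsProbabilityMeasure ν := hRPF.2.2.2.1

lemma IsRPF.nonempty (hRPF : IsRPF f p h ν) : Nonempty (MarkovShift A) :=
  have := hRPF.isProbabilityMeasure
  nonempty_of_isProbabilityMeasure ν

lemma IsRPF.transfer_eq (hRPF : IsRPF f p h ν) :
    transfer (fun x => f x - p) (fun x => ENNReal.ofReal (h x)) =
      fun x => ENNReal.ofReal (h x) := by
  obtain ⟨-, hpos, heig, -⟩ := hRPF
  ext x
  have hx : 0 < ruelle f h x := by rw [heig]; exact mul_pos (Real.exp_pos p) (hpos x)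
  rw [transfer_sub_const, transfer_ofReal_of_ruelle_pos (fun x => (hpos x).le) hx, heig,
    ENNReal.ofReal_mul (Real.exp_pos p).le, ← ennexp_eq_ofReal, ← mul_assoc, ← ennexp_add]
  simp

lemma IsRPF.ennexp_log_eq (hRPF : IsRPF f p h ν) :
    (fun x => ennexp (Real.log (h x))) = fun x => ENNReal.ofReal (h x) :=
  funext fun x => ennexp_log (hRPF.pos x)

lemma IsRPF.continuous_log (hRPF : IsRPF f p h ν) : Continuous fun x => Real.log (h x) :=
  hRPF.continuous.log fun x => (hRPF.pos x).ne'

lemma IsRPF.lintegral_eq_one (hRPF : IsRPF f p h ν) : ∫⁻ x, ENNReal.ofReal (h x) ∂ν = 1 := by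
  obtain ⟨-, hpos, -, -, -, hone⟩ := hRPF
  rw [← ofReal_integral_eq_lintegral_ofReal (.of_integral_ne_zero (hone ▸ one_ne_zero))
    (ae_of_all _ fun x => (hpos x).le), hone, ENNReal.ofReal_one]

lemma IsRPF.isProbabilityMeasure_gibbs (hRPF : IsRPF f p h ν) :
    IsProbabilityMeasure (gibbs h ν) :=
  ⟨by rw [gibbs, withDensity_apply _ .univ, setLIntegral_univ, hRPF.lintegral_eq_one]⟩

/-- The logarithm of the Jacobian (`g`-function) of the Gibbs measure `h dν`. -/
noncomputable def gibbsPotential (f : MarkovShift A → ℝ) (p : ℝ) (h : MarkovShift A → ℝ) :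
    MarkovShift A → ℝ :=
  normalize (fun x => f x - p) fun x => Real.log (h x)

lemma IsRPF.continuous_gibbsPotential (hRPF : IsRPF f p h ν) (hf : Continuous f) :
    Continuous (gibbsPotential f p h) :=
  continuous_normalize (by fun_prop) hRPF.continuous_log

lemma IsRPF.transfer_gibbsPotential_one (hRPF : IsRPF f p h ν) :
    transfer (gibbsPotential f p h) 1 = 1 :=
  transfer_normalize_one (by rw [hRPF.ennexp_log_eq, hRPF.transfer_eq])

lemma IsRPF.gibbsPotential_nonpos (hRPF : IsRPF f p h ν) (x : MarkovShift A) :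
    gibbsPotential f p h x ≤ 0 :=
  nonpos_of_transfer_one hRPF.transfer_gibbsPotential_one x

lemma IsRPF.dualTransfer_gibbs (hRPF : IsRPF f p h ν) (hf : Continuous f)
    (hbdd : ∀ a, BddAbove (f '' {x | x.1 0 = a})) :
    dualTransfer (gibbsPotential f p h) (gibbs h ν) = gibbs h ν := by
  rw [gibbs, ← hRPF.ennexp_log_eq]
  exact dualTransfer_normalize (by fun_prop) hRPF.continuous_log (hRPF.dualTransfer_eq hf hbdd)

lemma IsRPF.isInvariantProb_gibbs (hRPF : IsRPF f p h ν) (hf : Continuous f)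
    (hbdd : ∀ a, BddAbove (f '' {x | x.1 0 = a})) : IsInvariantProb (gibbs h ν) :=
  ⟨hRPF.isProbabilityMeasure_gibbs, map_shift_eq_self (hRPF.continuous_gibbsPotential hf)
    hRPF.transfer_gibbsPotential_one (hRPF.dualTransfer_gibbs hf hbdd)⟩

variable {D Q : ℝ} {K : ℕ} {F : Finset ℕ}

lemma IsRPF.log_le_log_add (hRPF : IsRPF f p h ν) (hKF : Connects A K F) (hf : Continuous f)
    (hD : HasBowenBound f D) (hQ : ∀ x, x.1 0 ∈ F → -Q ≤ f x) (x y : MarkovShift A) :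
    Real.log (h x) ≤ Real.log (h y) + (D + K * (Q + p)) := by
  have := hRPF.isProbabilityMeasure
  have hle := hKF.harnack (hD.sub_const p) (Q := Q + p) (fun x hx => by linarith [hQ x hx])
    (by fun_prop) (hRPF.dualTransfer_eq hf hD.bddAbove_image)
    (H := fun x => ENNReal.ofReal (h x)) (ENNReal.continuous_ofReal.comp hRPF.continuous)
    hRPF.transfer_eq (by rw [hRPF.lintegral_eq_one]; exact ENNReal.one_ne_top) x y
  rw [← ennexp_log (hRPF.pos x), ← ennexp_log (hRPF.pos y), ← ennexp_add, ennexp_le_ennexp] at hle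
  linarith

lemma IsRPF.boundedFun_log (hRPF : IsRPF f p h ν) (hKF : Connects A K F) (hf : Continuous f)
    (hD : HasBowenBound f D) (hQ : ∀ x, x.1 0 ∈ F → -Q ≤ f x) :
    BoundedFun fun x => Real.log (h x) := by
  obtain ⟨o⟩ := hRPF.nonempty
  refine ⟨|Real.log (h o)| + (D + K * (Q + p)), fun x => abs_le.2 ⟨?_, ?_⟩⟩
  · linarith [hRPF.log_le_log_add hKF hf hD hQ o x, neg_abs_le (Real.log (h o))]
  · linarith [hRPF.log_le_log_add hKF hf hD hQ x o, le_abs_self (Real.log (h o))]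

lemma IsRPF.gibbsPotential_le (hRPF : IsRPF f p h ν) (hKF : Connects A K F) (hf : Continuous f)
    (hD : HasBowenBound f D) (hQ : ∀ x, x.1 0 ∈ F → -Q ≤ f x) (x : MarkovShift A) :
    gibbsPotential f p h x ≤ f x - p + (D + K * (Q + p)) :=
  add_le_add_right (sub_le_iff_le_add'.2 (hRPF.log_le_log_add hKF hf hD hQ x (shift x))) _

lemma IsRPF.transfer_one_ne_top (hRPF : IsRPF f p h ν) (hKF : Connects A K F) (hf : Continuous f)
    (hD : HasBowenBound f D) (hQ : ∀ x, x.1 0 ∈ F → -Q ≤ f x) (x : MarkovShift A) :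
    transfer f 1 x ≠ ∞ := by
  set M := D + K * (Q + p)
  have hle (y : MarkovShift A) : f y ≤ M + p + gibbsPotential f p h y := by
    have := hRPF.log_le_log_add hKF hf hD hQ (shift y) y
    rw [gibbsPotential, normalize]
    linarith
  refine ne_top_of_le_ne_top (ennexp_ne_top (M + p)) ?_
  calc transfer f 1 x
      ≤ fiberSum shift (fun y => ennexp (M + p) * (ennexp (gibbsPotential f p h y) * 1)) x := by
        refine fiberSum_mono _ (fun y => ?_) x
        simpa [← ennexp_add] using hle y
    _ = ennexp (M + p) * transfer (gibbsPotential f p h) 1 x :=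
        congrFun (fiberSum_comp_mul shift (fun _ => ennexp (M + p)) _) x
    _ = ennexp (M + p) := by rw [hRPF.transfer_gibbsPotential_one, Pi.one_apply, mul_one]

end GibbsMeasure

section UniformBounds

variable {f : MarkovShift A → ℝ} {D Q : ℝ} {K : ℕ} {F : Finset ℕ}

lemma Connects.exists_symbolMajorant (hKF : Connects A K F) (hK : 0 < K) (hD : HasBowenBound f D)
    (hfin : ∀ x, transfer f 1 x ≠ ∞) :
    ∃ w : ℕ → ℝ≥0∞, ∑' a, w a ≠ ∞ ∧ ∀ x, ennexp (f x) ≤ w (x.1 0) := by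
  obtain ⟨Z, hZ⟩ := hKF.exists_finset hK
  let v (y : MarkovShift A) : ℝ≥0∞ := ennexp D * (ennexp (f y) * 1)
  refine ⟨fun a => ∑ z ∈ Z, (followers A a).indicator (v ∘ branch a) z, ?_, fun x => ?_⟩
  · rw [Summable.tsum_finsetSum fun _ _ => ENNReal.summable]
    refine ENNReal.sum_ne_top.2 fun z _ => ?_
    rw [← fiberSum_shift, congrFun (fiberSum_comp_mul shift (fun _ => ennexp D) _) z]
    exact ENNReal.mul_ne_top (ennexp_ne_top D) (hfin z)
  · obtain ⟨z, hzZ, hxz⟩ := hZ x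
    calc ennexp (f x) ≤ (followers A (x.1 0)).indicator (v ∘ branch (x.1 0)) z := by
          rw [Set.indicator_of_mem hxz]
          simpa [v, ← ennexp_add, add_comm] using hD.le_add (branch_apply_zero hxz)
      _ ≤ _ := Finset.single_le_sum (f := fun z =>
          (followers A (x.1 0)).indicator (v ∘ branch (x.1 0)) z) (fun _ _ => zero_le) hzZ

variable {β β₁ B p : ℝ} {w : ℕ → ℝ≥0∞} {h : MarkovShift A → ℝ} {ν : Measure (MarkovShift A)}

lemma IsRPF.exists_symbolMajorant_and_upperBound
    (hRPF : IsRPF (fun x => β₁ * f x) p h ν) (hKF : Connects A K F) (hK : 0 < K)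
    (hf : Continuous f) (hβ₁ : 0 < β₁) (hD : HasBowenBound (fun x => β₁ * f x) D)
    (hQ : ∀ x, x.1 0 ∈ F → -Q ≤ β₁ * f x) :
    ∃ (w : ℕ → ℝ≥0∞) (B : ℝ), (∀ x, ennexp (β₁ * f x) ≤ w (x.1 0)) ∧
      ∑' a, w a ≤ ennexp (β₁ * B) ∧ ∀ x, f x ≤ B := by
  obtain ⟨w, hwfin, hw⟩ := hKF.exists_symbolMajorant hK hD <|
    hRPF.transfer_one_ne_top hKF (by fun_prop) hD hQ
  obtain ⟨b, hb⟩ := exists_le_ennexp hwfin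
  obtain ⟨B, rfl⟩ : ∃ B, b = β₁ * B := ⟨b / β₁, by field_simp⟩
  exact ⟨w, B, hw, hb, fun x => le_of_mul_le_mul_left
    (ennexp_le_ennexp.1 ((hw x).trans ((ENNReal.le_tsum _).trans hb))) hβ₁⟩

lemma IsRPF.pressure_le (hRPF : IsRPF (fun x => β * f x) p h ν) (hf : Continuous f)
    (hbdd : ∀ a, BddAbove ((fun x => β * f x) '' {x | x.1 0 = a})) (hβ : β₁ ≤ β)
    (hw : ∀ x, ennexp (β₁ * f x) ≤ w (x.1 0)) (hwB : ∑' a, w a ≤ ennexp (β₁ * B))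
    (hB : ∀ x, f x ≤ B) : p ≤ β * B := by
  have := hRPF.isProbabilityMeasure
  have hs (y : MarkovShift A) :
      ennexp (β * f y - p) * 1 ≤ ennexp ((β - β₁) * B - p) * w (y.1 0) := by
    refine le_trans ?_ (mul_le_mul_right (hw y) _)
    rw [mul_one, ← ennexp_add, ennexp_le_ennexp]
    linarith [mul_le_mul_of_nonneg_left (hB y) (sub_nonneg.2 hβ)]
  have hone : (1 : ℝ≥0∞) ≤ ennexp ((β - β₁) * B - p) * ennexp (β₁ * B) := by
    refine le_trans ?_ (mul_le_mul_right hwB _)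
    simpa [ENNReal.tsum_mul_left] using lintegral_le_tsum
      (s := fun a => ennexp ((β - β₁) * B - p) * w a) (by fun_prop)
      (hRPF.dualTransfer_eq (by fun_prop) hbdd) (u := fun _ => 1) measurable_const hs
  rw [← ennexp_add, ← ennexp_zero, ennexp_le_ennexp] at hone
  linarith

lemma IsRPF.gibbsPotential_half_le (hRPF : IsRPF (fun x => β * f x) p h ν)
    (hKF : Connects A K F) (hK : 0 < K) (hf : Continuous f) (hD : HasBowenBound f D)
    (hQ : ∀ x, x.1 0 ∈ F → -Q ≤ f x) (hβ₁ : 0 < β₁) (hβ : 2 * β₁ ≤ β) (hp : p ≤ β * B)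
    (x : MarkovShift A) :
    gibbsPotential (fun x => β * f x) p h x / 2 ≤ β₁ * (f x + (D + K * Q + (K - 1) * B)) := by
  set C := D + K * Q + (K - 1) * B
  have hβ0 : 0 ≤ β := by linarith
  have hK1 : (0 : ℝ) ≤ K - 1 := sub_nonneg.2 (by exact_mod_cast hK)
  have hnonpos := hRPF.gibbsPotential_nonpos x
  have hle : gibbsPotential (fun x => β * f x) p h x ≤ β * (f x + C) :=
    calc gibbsPotential (fun x => β * f x) p h x
        ≤ β * f x - p + (β * D + K * (β * Q + p)) :=
          hRPF.gibbsPotential_le hKF (by fun_prop) (hD.const_mul hβ0) (fun x hx => by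
            linarith [mul_le_mul_of_nonneg_left (hQ x hx) hβ0]) x
      _ = β * (f x + (D + K * Q)) + (K - 1) * p := by ring
      _ ≤ β * (f x + (D + K * Q)) + (K - 1) * (β * B) := by gcongr
      _ = β * (f x + C) := by ring
  rcases le_total 0 (f x + C) with hC | hC
  · linarith [mul_nonneg hβ₁.le hC]
  · linarith [mul_le_mul_of_nonpos_right hβ hC]

lemma IsRPF.isAlmostMaximizing_and_measure_symbol_le (hRPF : IsRPF (fun x => β * f x) p h ν)
    (hf : Continuous f) (hβ : 0 < β) (hbdd : ∀ a, BddAbove ((fun x => β * f x) '' {x | x.1 0 = a}))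
    (hlog : BoundedFun fun x => Real.log (h x)) {s : ℕ → ℝ≥0∞} (hs : ∑' a, s a ≠ ∞)
    (hle : ∀ x, ennexp (gibbsPotential (fun x => β * f x) p h x / 2) ≤ s (x.1 0)) :
    IsAlmostMaximizing f ((2 * ∑' a, s a).toReal / β) (gibbs h ν) ∧
      ∀ a, gibbs h ν {x | x.1 0 = a} ≤ s a := by
  have hβf : Continuous fun x => β * f x := by fun_prop
  have := hRPF.isProbabilityMeasure_gibbs
  have hcont := hRPF.continuous_gibbsPotential hβf
  have hdual := hRPF.dualTransfer_gibbs hβf hbdd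
  refine ⟨isAlmostMaximizing_of_normalize (hRPF.isInvariantProb_gibbs hβf hbdd) hβ hf
    hRPF.continuous_log hlog rfl hRPF.gibbsPotential_nonpos (by finiteness)
    (lintegral_neg_le_tsum hcont hdual hle), measure_symbol_le hcont hdual fun x => ?_⟩
  exact (ennexp_le_ennexp.2 (by linarith [hRPF.gibbsPotential_nonpos x])).trans (hle x)

variable {P : ℝ → ℝ} {h : ℝ → MarkovShift A → ℝ} {ν : ℝ → Measure (MarkovShift A)}

/-- Comparing with a single inverse temperature `β₁` makes all estimates uniform: `e^{β₁ f}` has a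
summable majorant on symbols, and `e^{ψ_β / 2}` is at most a constant multiple of `e^{β₁ f}` for
every normalised potential `ψ_β` with `β ≥ 2 β₁`. -/
theorem exists_uniform_gibbs_bounds (hbip : FinitelyPrimitive A) (hf : Continuous f)
    (hbowen : BddAbove (waltersSet f 0)) {β₀ : ℝ}
    (hRPF : ∀ β, β₀ < β → IsRPF (fun x => β * f x) (P β) (h β) (ν β)) :
    ∃ (β₁ B E : ℝ) (s : ℕ → ℝ≥0∞), (∀ x, f x ≤ B) ∧ ∑' a, s a ≠ ∞ ∧ ∀ β, β₁ ≤ β → β₀ < β ∧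
      IsAlmostMaximizing f (E / β) (gibbs (h β) (ν β)) ∧
      ∀ a, gibbs (h β) (ν β) {x | x.1 0 = a} ≤ s a := by
  obtain ⟨β₁, hβ₁⟩ := exists_gt (max β₀ 0)
  obtain ⟨hβ₀, hpos⟩ := max_lt_iff.1 hβ₁
  obtain ⟨o⟩ := (hRPF β₁ hβ₀).nonempty
  obtain ⟨K, F, hK, hKF⟩ := hbip.exists_connects o
  obtain ⟨D, hD⟩ := exists_hasBowenBound hbowen
  obtain ⟨Q, hQ⟩ := hD.exists_lowerBound F
  have hQβ {β : ℝ} (hβ : 0 ≤ β) (x : MarkovShift A) (hx : x.1 0 ∈ F) : -(β * Q) ≤ β * f x := by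
    linarith [mul_le_mul_of_nonneg_left (hQ x hx) hβ]
  obtain ⟨w, B, hw, hwB, hB⟩ := (hRPF β₁ hβ₀).exists_symbolMajorant_and_upperBound hKF hK hf hpos
    (hD.const_mul hpos.le) (hQβ hpos.le)
  set c := ennexp (β₁ * (D + K * Q + (K - 1) * B))
  have hs : ∑' a, c * w a ≠ ∞ := by
    rw [ENNReal.tsum_mul_left]
    exact ENNReal.mul_ne_top (ennexp_ne_top _) (ne_top_of_le_ne_top (ennexp_ne_top _) hwB)
  refine ⟨2 * β₁, B, (2 * ∑' a, c * w a).toReal, fun a => c * w a, hB, hs, fun β hβ => ?_⟩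
  have hβpos : 0 < β := by linarith
  have hβ₀' : β₀ < β := by linarith
  have hDβ := hD.const_mul hβpos.le
  have hp := (hRPF β hβ₀').pressure_le hf hDβ.bddAbove_image (by linarith) hw hwB hB
  refine ⟨hβ₀', (hRPF β hβ₀').isAlmostMaximizing_and_measure_symbol_le hf hβpos
    hDβ.bddAbove_image ((hRPF β hβ₀').boundedFun_log hKF (by fun_prop) hDβ (hQβ hβpos.le)) hs
    fun x => ?_⟩
  refine le_trans ?_ (mul_le_mul_right (hw x) _)
  rw [← ennexp_add, ennexp_le_ennexp, add_comm, ← mul_add]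
  exact (hRPF β hβ₀').gibbsPotential_half_le hKF hK hf hD hQ hpos hβ hp x

end UniformBounds

section WeakLimits

variable {f : MarkovShift A → ℝ} {m : Measure (MarkovShift A)}
  {μs : ℕ → ProbabilityMeasure (MarkovShift A)} {μ : ProbabilityMeasure (MarkovShift A)}

lemma tendsto_iff_forall_cylinder :
    Tendsto μs atTop (𝓝 μ) ↔ ∀ w, Tendsto
      (fun j => ((μs j : Measure (MarkovShift A)) (cylinder w)).toReal) atTop
      (𝓝 ((μ : Measure (MarkovShift A)) (cylinder w)).toReal) := by
  refine ⟨fun hμ w => ?_, fun hcyl => ?_⟩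
  · exact NNReal.tendsto_coe.2 <|
      ProbabilityMeasure.tendsto_measure_of_isClopen_of_tendsto hμ (isClopen_cylinder w)
  refine isPiSystem_cylOf.tendsto_probabilityMeasure_of_tendsto_of_mem ?_ (fun U hU x hx => ?_) ?_
  · rintro _ ⟨x, n, rfl⟩
    exact (isClopen_cylOf x n).isOpen.measurableSet
  · obtain ⟨n, -, hn⟩ := (nhds_hasBasis_cylOf x).mem_iff.1 (hU.mem_nhds hx)
    exact ⟨_, ⟨x, n, rfl⟩, (nhds_hasBasis_cylOf x).mem_of_mem trivial, hn⟩
  · rintro _ ⟨x, n, rfl⟩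
    rw [cylOf_eq_cylinder]
    exact NNReal.tendsto_coe.1 (hcyl _)

lemma isInvariantProb_of_tendsto (hμ : Tendsto μs atTop (𝓝 μ))
    (hinv : ∀ᶠ j in atTop, IsInvariantProb (μs j : Measure (MarkovShift A))) :
    IsInvariantProb (μ : Measure (MarkovShift A)) := by
  have hmap := ProbabilityMeasure.tendsto_map_of_tendsto_of_continuous μs μ hμ continuous_shift
  have heq : (fun j => (μs j).map continuous_shift.measurable.aemeasurable) =ᶠ[atTop] μs :=
    hinv.mono fun j hj => Subtype.ext hj.2
  have hfix := tendsto_nhds_unique (hmap.congr' heq) hμ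
  exact ⟨inferInstance, congrArg Subtype.val hfix⟩

theorem isMaximizing_of_tendsto (hf : Continuous f) {B : ℝ} (hB : ∀ x, f x ≤ B)
    (hμ : Tendsto μs atTop (𝓝 μ)) {ε : ℕ → ℝ} (hε : Tendsto ε atTop (𝓝 0))
    (hopt : ∀ᶠ j in atTop, IsAlmostMaximizing f (ε j) (μs j : Measure (MarkovShift A))) :
    IsMaximizing f (μ : Measure (MarkovShift A)) := by
  have hinv := isInvariantProb_of_tendsto hμ (hopt.mono fun j hj => hj.isInvariantProb)
  have hlim {m : Measure (MarkovShift A)} (hm : IsInvariantProb m) (hfm : Integrable f m) :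
      Integrable f (μ : Measure (MarkovShift A)) ∧
        ∫ x, f x ∂m ≤ ∫ x, f x ∂(μ : Measure (MarkovShift A)) := by
    refine integrable_and_le_integral_of_tendsto hf hB hμ (a := fun j => ∫ x, f x ∂m - ε j) ?_
      (hopt.mono fun j hj => ⟨hj.integrable, sub_le_iff_le_add.2 (hj.integral_le m hm hfm)⟩)
    simpa using hε.const_sub (∫ x, f x ∂m)
  obtain ⟨j, hj⟩ := hopt.exists
  have hint := (hlim hj.isInvariantProb hj.integrable).1
  have hgreatest : IsGreatest
      {c | ∃ m : Measure (MarkovShift A), IsInvariantProb m ∧ Integrable f m ∧ ∫ x, f x ∂m = c}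
      (∫ x, f x ∂(μ : Measure (MarkovShift A))) := by
    refine ⟨⟨μ, hinv, hint, rfl⟩, ?_⟩
    rintro _ ⟨m, hm, hfm, rfl⟩
    exact (hlim hm hfm).2
  exact ⟨hinv, hint, hgreatest.csSup_eq.symm⟩

lemma IsInvariantProb.measure_coord (hm : IsInvariantProb m) (i : ℕ) (S : Set ℕ) :
    m {x | x.1 i ∈ S} = m {x | x.1 0 ∈ S} := by
  have hS : MeasurableSet {x : MarkovShift A | x.1 0 ∈ S} :=
    (continuous_coord 0).measurable S.to_countable.measurableSet
  rw [← (hm.measurePreserving.iterate i).measure_preimage hS.nullMeasurableSet]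
  simp [Set.preimage, shift_iterate_apply]

lemma measure_symbol_ge_le_tsum {s : ℕ → ℝ≥0∞} (hm : ∀ a, m {x | x.1 0 = a} ≤ s a) (N : ℕ) :
    m {x | N ≤ x.1 0} ≤ ∑' k, s (k + N) := by
  have hcover : {x : MarkovShift A | N ≤ x.1 0} ⊆ ⋃ k, {x | x.1 0 = k + N} := fun x hx =>
    Set.mem_iUnion.2 ((Nat.exists_eq_add_of_le' hx).imp fun _ hk => hk)
  exact (measure_mono hcover).trans <|
    (measure_iUnion_le _).trans (ENNReal.tsum_le_tsum fun k => hm _)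

lemma isCompact_setOf_forall_coord_lt (N : ℕ → ℕ) :
    IsCompact {x : MarkovShift A | ∀ i, x.1 i < N i} := by
  have hpi : IsCompact (Set.univ.pi fun i => Set.Iio (N i)) :=
    isCompact_univ_pi fun i => (Set.finite_Iio _).isCompact
  have heq : {x : MarkovShift A | ∀ i, x.1 i < N i} =
      (fun x : MarkovShift A => x.1) ⁻¹' Set.univ.pi fun i => Set.Iio (N i) := by
    ext x
    simp
  exact heq ▸ isClosedEmbedding_val.isCompact_preimage hpi

theorem isTightMeasureSet_of_measure_symbol_le {s : ℕ → ℝ≥0∞} (hs : ∑' a, s a ≠ ∞)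
    {S : Set (Measure (MarkovShift A))}
    (hS : ∀ m ∈ S, IsInvariantProb m ∧ ∀ a, m {x | x.1 0 = a} ≤ s a) : IsTightMeasureSet S := by
  rw [isTightMeasureSet_iff_exists_isCompact_measure_compl_le]
  intro ε hε
  obtain ⟨ε', hε', hsum⟩ := ENNReal.exists_pos_sum_of_countable' hε.ne' ℕ
  have htail (i : ℕ) : ∃ N, ∑' k, s (k + N) ≤ ε' i :=
    ((ENNReal.tendsto_sum_nat_add s hs).eventually_le_const (hε' i)).exists
  choose N hN using htail
  refine ⟨_, isCompact_setOf_forall_coord_lt N, fun m hm => ?_⟩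
  obtain ⟨hinv, hsymbol⟩ := hS m hm
  calc m {x | ∀ i, x.1 i < N i}ᶜ = m (⋃ i, {x | N i ≤ x.1 i}) := by
        congr 1
        ext x
        simp
    _ ≤ ∑' i, m {x | N i ≤ x.1 i} := measure_iUnion_le _
    _ ≤ ∑' i, ε' i := ENNReal.tsum_le_tsum fun i =>
        (hinv.measure_coord i (Set.Ici (N i))).trans_le <|
          (measure_symbol_ge_le_tsum hsymbol (N i)).trans (hN i)
    _ ≤ ε := hsum.le

lemma exists_subseq_tendsto {s : ℕ → ℝ≥0∞} (hs : ∑' a, s a ≠ ∞)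
    (hμs : ∀ j, IsInvariantProb (μs j : Measure (MarkovShift A)) ∧
      ∀ a, (μs j : Measure (MarkovShift A)) {x | x.1 0 = a} ≤ s a) :
    ∃ (μ : ProbabilityMeasure (MarkovShift A)) (φ : ℕ → ℕ),
      StrictMono φ ∧ Tendsto (μs ∘ φ) atTop (𝓝 μ) := by
  have htight : IsTightMeasureSet
      {m | ∃ μ ∈ Set.range μs, (μ : Measure (MarkovShift A)) = m} := by
    refine isTightMeasureSet_of_measure_symbol_le hs ?_
    rintro _ ⟨_, ⟨j, rfl⟩, rfl⟩
    exact hμs j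
  obtain ⟨μ, -, φ, hφ, hlim⟩ := (isCompact_closure_of_isTightMeasureSet htight).tendsto_subseq
    fun j => subset_closure (Set.mem_range_self j)
  exact ⟨μ, φ, hφ, hlim⟩

end WeakLimits

section Walters

variable {f : MarkovShift A → ℝ}

lemma SatisfiesWalters.continuous (hf : SatisfiesWalters f) : Continuous f := by
  obtain ⟨hbdd, hlim⟩ := hf
  refine continuous_iff_continuousAt.2 fun x => Metric.tendsto_nhds.2 fun ε hε => ?_
  obtain ⟨k, hkε, hk⟩ :=
    ((hlim.eventually (gt_mem_nhds hε)).and (eventually_ge_atTop 1)).exists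
  filter_upwards [(nhds_hasBasis_cylOf x).mem_of_mem (i := 1 + k) trivial] with y hy
  have hvar : |f y - f x| ∈ waltersSet f k :=
    ⟨1, le_rfl, y, x, hy, by simp [birkhoff]⟩
  exact (le_csSup (hbdd k hk) hvar).trans_lt hkε

/-- `S_{n+1} f = S_n f + f ∘ σ^n`, where the Walters condition with `k = 1` controls the first
summand and `Var_1 f < ∞` the second. -/
lemma SatisfiesWalters.bddAbove_waltersSet_zero (hf : SatisfiesWalters f) (hVar1 : Var1Finite f) :
    BddAbove (waltersSet f 0) := by
  obtain ⟨C, hC⟩ := hf.1 1 le_rfl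
  obtain ⟨V, hV⟩ := hVar1
  refine ⟨max C 0 + V, ?_⟩
  rintro _ ⟨n, hn, x, y, hxy, rfl⟩
  obtain ⟨n, rfl⟩ := Nat.exists_eq_add_of_le' hn
  have hlast : |birkhoff f 1 (shift^[n] x) - birkhoff f 1 (shift^[n] y)| ≤ V :=
    hV ⟨_, _, fun i hi => by
      simpa only [shift_iterate_apply] using hxy (i + n) (by omega), rfl⟩
  have hinit : |birkhoff f n x - birkhoff f n y| ≤ max C 0 := by
    rcases n.eq_zero_or_pos with rfl | hn
    · simp [birkhoff]
    · exact (hC ⟨n, hn, x, y, hxy, rfl⟩).trans (le_max_left C 0)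
  rw [birkhoff_add, birkhoff_add, add_sub_add_comm]
  exact (abs_add_le _ _).trans (add_le_add hinit hlast)

end Walters

end MarkovShift

namespace MarkovShift

theorem accumulation_points_are_maximizing_general
    {A : ℕ → ℕ → Bool}
    (hbip : FinitelyPrimitive A)
    {f : MarkovShift A → ℝ}
    (hf : Continuous f)
    (hbowen : BddAbove (waltersSet f 0))
    {P : ℝ → ℝ}
    {h : ℝ → MarkovShift A → ℝ}
    {ν : ℝ → Measure (MarkovShift A)}
    {β₀ : ℝ}
    (hRPF : ∀ β, β₀ < β → IsRPF (fun x => β * f x) (P β) (h β) (ν β)) :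
    (∃ (βs : ℕ → ℝ) (μ' : Measure (MarkovShift A)), (∀ j, β₀ < βs j) ∧
        Tendsto βs atTop atTop ∧ IsProbabilityMeasure μ' ∧
        ∀ w : List ℕ,
          Tendsto (fun j => ((gibbs (h (βs j)) (ν (βs j))) (cylinder w)).toReal)
            atTop (𝓝 ((μ' (cylinder w)).toReal))) ∧
      (∀ (βs : ℕ → ℝ) (μ' : Measure (MarkovShift A)), (∀ j, β₀ < βs j) →
        Tendsto βs atTop atTop → IsProbabilityMeasure μ' →
        (∀ w : List ℕ,
          Tendsto (fun j => ((gibbs (h (βs j)) (ν (βs j))) (cylinder w)).toReal)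
            atTop (𝓝 ((μ' (cylinder w)).toReal))) →
        IsMaximizing f μ') := by
  obtain ⟨β₁, B, E, s, hB, hs, hgibbs⟩ := exists_uniform_gibbs_bounds hbip hf hbowen hRPF
  have hprob (β : ℝ) (hβ : β₀ < β) := (hRPF β hβ).isProbabilityMeasure_gibbs
  refine ⟨?_, fun βs μ' hβ₀ hβs hμ' hcyl => ?_⟩
  · obtain ⟨b, hb, hb_top⟩ : ∃ b : ℕ → ℝ, (∀ j, β₁ ≤ b j) ∧ Tendsto b atTop atTop :=
      ⟨fun j => β₁ + j, fun j => le_add_of_nonneg_right j.cast_nonneg,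
        tendsto_atTop_add_const_left _ _ tendsto_natCast_atTop_atTop⟩
    have hβ₀ (j : ℕ) : β₀ < b j := (hgibbs _ (hb j)).1
    obtain ⟨μ', φ, hφ, hlim⟩ := exists_subseq_tendsto (μs := fun j => ⟨_, hprob _ (hβ₀ j)⟩) hs
      fun j => ⟨(hgibbs _ (hb j)).2.1.isInvariantProb, (hgibbs _ (hb j)).2.2⟩
    have hcyl := tendsto_iff_forall_cylinder.1 hlim
    exact ⟨b ∘ φ, μ', fun j => hβ₀ _, hb_top.comp hφ.tendsto_atTop, inferInstance, hcyl⟩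
  · have hlim : Tendsto (β := ProbabilityMeasure (MarkovShift A))
        (fun j => ⟨_, hprob _ (hβ₀ j)⟩) atTop (𝓝 ⟨μ', hμ'⟩) :=
      tendsto_iff_forall_cylinder.2 hcyl
    exact isMaximizing_of_tendsto hf hB hlim (hβs.const_div_atTop E)
      ((hβs.eventually_ge_atTop β₁).mono fun j hj => (hgibbs _ hj).2.1)

/-- The family `(μ_β)_{β>1}` has a weak* accumulation point as `β → ∞`, and every
weak* limit of a sequence `μ_{β_j}` with `β_j → ∞` is a maximizing measure for `f`. -/
theorem accumulation_points_are_maximizing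
    (A : ℕ → ℕ → Bool)
    (hmix : TopologicallyMixing A)
    (hbip : FinitelyPrimitive A)
    (f : MarkovShift A → ℝ)
    (hWalters : SatisfiesWalters f)
    (hVar1 : Var1Finite f)
    (P : ℝ → ℝ)
    (hPfin : HasGurevichPressure f (P 1))
    (h : ℝ → MarkovShift A → ℝ)
    (ν : ℝ → Measure (MarkovShift A))
    (hRPF : ∀ β : ℝ, 1 < β → IsRPF (fun x => β * f x) (P β) (h β) (ν β)) :
    (∃ (βs : ℕ → ℝ) (μ' : Measure (MarkovShift A)), (∀ j, 1 < βs j) ∧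
        Tendsto βs atTop atTop ∧ IsProbabilityMeasure μ' ∧
        ∀ w : List ℕ,
          Tendsto (fun j => ((gibbs (h (βs j)) (ν (βs j))) (cylinder w)).toReal)
            atTop (𝓝 ((μ' (cylinder w)).toReal))) ∧
      (∀ (βs : ℕ → ℝ) (μ' : Measure (MarkovShift A)), (∀ j, 1 < βs j) →
        Tendsto βs atTop atTop → IsProbabilityMeasure μ' →
        (∀ w : List ℕ,
          Tendsto (fun j => ((gibbs (h (βs j)) (ν (βs j))) (cylinder w)).toReal)
            atTop (𝓝 ((μ' (cylinder w)).toReal))) →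
        IsMaximizing f μ') :=
  accumulation_points_are_maximizing_general hbip hWalters.continuous
    (hWalters.bddAbove_waltersSet_zero hVar1) hRPF

end MarkovShift
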